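/- Let q be a power of an odd prime and let u be an integer with 1 ≤ u < q²−1 such that q−1 does not divide u and q+1 does not divide u. Then the induced character χ := Ind_B^{SU_3(q)} θ_u is an irreducible complex character of SU_3(q) of degree q³+1 whose character field is not contained in ℝ, and χ has unitary discriminant −q^{u+1}·f(u) if q ≡ 1 (mod 4) and q^{u+1}·f(u) if q ≡ 3 (mod 4), where f(u) := −(δ^{(q+1)u} − δ^{−(q+1)u})² if (q−1)/2 does not divide u, and f(u) := −(δ^{u} + δ^{qu})² if (q−1)/2 divides u. -/

import Mathlib

open Matrix

noncomputable section

namespace Paper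

/-- The character of a matrix representation. -/
def charOf {G : Type} [Group G] {n : ℕ} (ρ : G →* GL (Fin n) ℂ) : G → ℂ :=
  fun g => Matrix.trace ((ρ g : Matrix (Fin n) (Fin n) ℂ))

/-- Irreducibility of a complex matrix representation. -/
def IsIrredRep {G : Type} [Group G] {n : ℕ} (ρ : G →* GL (Fin n) ℂ) : Prop :=
  0 < n ∧ ∀ W : Submodule ℂ (Fin n → ℂ),
    (∀ (g : G), ∀ v ∈ W, (ρ g : Matrix (Fin n) (Fin n) ℂ).mulVec v ∈ W) → W = ⊥ ∨ W = ⊤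

/-- `χ` is an irreducible complex character of `G`. -/
def IsIrrChar {G : Type} [Group G] (χ : G → ℂ) : Prop :=
  ∃ (n : ℕ) (ρ : G →* GL (Fin n) ℂ), IsIrredRep ρ ∧ χ = charOf ρ

/-- The character field `ℚ(χ)`, as a subfield of `ℂ`. -/
def charField {G : Type} [Group G] (χ : G → ℂ) : Subfield ℂ :=
  Subfield.closure (Set.range χ)

/-- The subfield of real numbers inside `ℂ`. -/
def realsIn : Subfield ℂ := Subfield.closure (Set.range ((↑) : ℝ → ℂ))

/-- The character field of `χ` is not contained in `ℝ`. -/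
def NotReal {G : Type} [Group G] (χ : G → ℂ) : Prop := ¬ charField χ ≤ realsIn

/-- `χ` has unitary discriminant `d`. -/
def HasUnitaryDisc {G : Type} [Group G] (χ : G → ℂ) (d : ℂ) : Prop :=
  ∀ (n : ℕ) (ρ : G →* GL (Fin n) ℂ),
    χ = charOf ρ →
    (∀ g i j, ((ρ g : Matrix (Fin n) (Fin n) ℂ)) i j ∈ charField χ) →
    ∀ H : Matrix (Fin n) (Fin n) ℂ,
      (∀ i j, H i j ∈ charField χ) →
      IsUnit H.det →
      H.conjTranspose = H →
      (∀ g, ((ρ g : Matrix (Fin n) (Fin n) ℂ)).conjTranspose * H *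
        (ρ g : Matrix (Fin n) (Fin n) ℂ) = H) →
      ∃ z ∈ charField χ, z ≠ 0 ∧
        (-1 : ℂ) ^ (n * (n - 1) / 2) * H.det = d * (z * (starRingEnd ℂ) z)

/-- `χ` has orthogonal discriminant `d`. -/
def HasOrthDisc {G : Type} [Group G] (χ : G → ℂ) (d : ℂ) : Prop :=
  ∀ (n : ℕ) (ρ : G →* GL (Fin n) ℂ),
    χ = charOf ρ →
    (∀ g i j, ((ρ g : Matrix (Fin n) (Fin n) ℂ)) i j ∈ charField χ) →
    ∀ H : Matrix (Fin n) (Fin n) ℂ,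
      (∀ i j, H i j ∈ charField χ) →
      IsUnit H.det →
      H.transpose = H →
      (∀ g, ((ρ g : Matrix (Fin n) (Fin n) ℂ)).transpose * H *
        (ρ g : Matrix (Fin n) (Fin n) ℂ) = H) →
      ∃ z ∈ charField χ, z ≠ 0 ∧
        (-1 : ℂ) ^ (n * (n - 1) / 2) * H.det = d * z ^ 2

/-- `χ` is a rational character. -/
def IsRationalChar {G : Type} [Group G] (χ : G → ℂ) : Prop :=
  ∀ g, ∃ r : ℚ, χ g = (r : ℂ)

/-- `χ` is the character of a representation over `ℚ`. -/
def RealizableOverQ {G : Type} [Group G] (χ : G → ℂ) : Prop :=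
  ∃ (n : ℕ) (ρ : G →* GL (Fin n) ℂ), χ = charOf ρ ∧
    ∀ g i j, ∃ r : ℚ, ((ρ g : Matrix (Fin n) (Fin n) ℂ)) i j = (r : ℂ)

end Paper

namespace Paper

variable (p k : ℕ) (F : Type) [Field F] [Fintype F] [ExpChar F p]

/-- The Gram matrix `Ω` (anti-diagonal ones). -/
def Om : Matrix (Fin 3) (Fin 3) F :=
  Matrix.of fun i j => if (i : ℕ) + (j : ℕ) = 2 then 1 else 0

/-- Entrywise `q`-power Frobenius `Φ` on `3×3` matrices, where `q = p^k`. -/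
def Phi : Matrix (Fin 3) (Fin 3) F →+* Matrix (Fin 3) (Fin 3) F :=
  (iterateFrobenius F p k).mapMatrix

/-- The special unitary group `SU₃(q) = {g ∈ SL₃(F_{q²}) : Φ(g)ᵀ·Ω·g = Ω}`. -/
def SU3 : Subgroup (Matrix.SpecialLinearGroup (Fin 3) F) where
  carrier := {g | (Phi p k F g.val)ᵀ * Om F * g.val = Om F}
  one_mem' := by
    show (Phi p k F (1 : Matrix.SpecialLinearGroup (Fin 3) F).val)ᵀ * Om F *
        (1 : Matrix.SpecialLinearGroup (Fin 3) F).val = Om F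
    simp
  mul_mem' := by
    intro a b ha hb
    show (Phi p k F (a.val * b.val))ᵀ * Om F * (a.val * b.val) = Om F
    have ha' : (Phi p k F a.val)ᵀ * Om F * a.val = Om F := ha
    have hb' : (Phi p k F b.val)ᵀ * Om F * b.val = Om F := hb
    calc (Phi p k F (a.val * b.val))ᵀ * Om F * (a.val * b.val)
        = (Phi p k F b.val)ᵀ * ((Phi p k F a.val)ᵀ * Om F * a.val) * b.val := by
          rw [_root_.map_mul, Matrix.transpose_mul]; simp only [Matrix.mul_assoc]
      _ = (Phi p k F b.val)ᵀ * Om F * b.val := by rw [ha']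
      _ = Om F := hb'
  inv_mem' := by
    intro a ha
    show (Phi p k F (a⁻¹).val)ᵀ * Om F * (a⁻¹).val = Om F
    have ha' : (Phi p k F a.val)ᵀ * Om F * a.val = Om F := ha
    have h1 : a.val * (a⁻¹).val = 1 := by
      rw [← Matrix.SpecialLinearGroup.coe_mul, mul_inv_cancel,
        Matrix.SpecialLinearGroup.coe_one]
    nth_rewrite 1 [← ha']
    calc (Phi p k F (a⁻¹).val)ᵀ * ((Phi p k F a.val)ᵀ * Om F * a.val) * (a⁻¹).val
        = (Phi p k F a.val * Phi p k F (a⁻¹).val)ᵀ * Om F * (a.val * (a⁻¹).val) := by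
          rw [Matrix.transpose_mul]; simp only [Matrix.mul_assoc]
      _ = Om F := by rw [← _root_.map_mul, h1, _root_.map_one, Matrix.transpose_one,
            Matrix.one_mul, Matrix.mul_one]

end Paper

namespace Paper

variable (p k : ℕ) (F : Type) [Field F] [Fintype F] [ExpChar F p]

/-- The Borel subgroup of `SU₃(q)`: the upper triangular matrices in `SU₃(q)`. -/
def Borel : Subgroup ↥(SU3 p k F) where
  carrier := {g | Matrix.BlockTriangular ((g : Matrix.SpecialLinearGroup (Fin 3) F) :
    Matrix (Fin 3) (Fin 3) F) id}
  one_mem' := by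
    show Matrix.BlockTriangular ((1 : Matrix.SpecialLinearGroup (Fin 3) F) :
      Matrix (Fin 3) (Fin 3) F) id
    rw [Matrix.SpecialLinearGroup.coe_one]
    exact Matrix.blockTriangular_one
  mul_mem' := by
    intro a b ha hb
    exact Matrix.BlockTriangular.mul ha hb
  inv_mem' := by
    intro a ha
    show Matrix.BlockTriangular (((a⁻¹ : ↥(SU3 p k F)) : Matrix.SpecialLinearGroup (Fin 3) F) :
      Matrix (Fin 3) (Fin 3) F) id
    have hcoe : (((a⁻¹ : ↥(SU3 p k F)) : Matrix.SpecialLinearGroup (Fin 3) F) :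
        Matrix (Fin 3) (Fin 3) F)
        = (((a : ↥(SU3 p k F)) : Matrix.SpecialLinearGroup (Fin 3) F) :
          Matrix (Fin 3) (Fin 3) F)⁻¹ := by
      rw [show ((a⁻¹ : ↥(SU3 p k F)) : Matrix.SpecialLinearGroup (Fin 3) F)
        = ((a : ↥(SU3 p k F)) : Matrix.SpecialLinearGroup (Fin 3) F)⁻¹ from rfl]
      rw [Matrix.SpecialLinearGroup.coe_inv, Matrix.inv_def,
        ((a : ↥(SU3 p k F)) : Matrix.SpecialLinearGroup (Fin 3) F).2]
      simp
    rw [hcoe]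
    haveI : Invertible (((a : ↥(SU3 p k F)) : Matrix.SpecialLinearGroup (Fin 3) F) :
        Matrix (Fin 3) (Fin 3) F) := by
      apply Matrix.invertibleOfIsUnitDet
      rw [((a : ↥(SU3 p k F)) : Matrix.SpecialLinearGroup (Fin 3) F).2]
      exact isUnit_one
    exact Matrix.blockTriangular_inv_of_blockTriangular ha

end Paper

namespace Paper

open scoped Classical in
/-- The character of `G` induced from a character `ψ` of the subgroup `U`. -/
def inducedChar {G : Type} [Group G] (U : Subgroup G) (ψ : ↥U → ℂ) : G → ℂ :=
  fun g => (Nat.card ↥U : ℂ)⁻¹ *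
    ∑ᶠ x : G, if h : x⁻¹ * g * x ∈ U then ψ (⟨x⁻¹ * g * x, h⟩ : ↥U) else 0

section PartOne

open scoped Classical

/-- Auxiliary field data: `F` has `q^2` elements with `q = 2h+1`, `N` is the coefficient field. -/
structure Dat (F N : Type) [Field F] [Fintype F] [Field N] where
  h : ℕ
  hh : 1 ≤ h
  u : ℕ
  φ : F →+* F
  hφ : ∀ x, φ x = x ^ (2 * h + 1)
  card : Fintype.card F = (2 * h + 1) ^ 2
  two : (2 : F) ≠ 0
  g : F
  g0 : g ≠ 0
  hg : ∀ x : F, x ≠ 0 → ∃ i < 4 * h * (h + 1), x = g ^ i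
  hgo : ∀ i : ℕ, g ^ i = 1 ↔ 4 * h * (h + 1) ∣ i
  θ : MulChar F N
  ht : θ g ^ (2 * h + 2) ≠ 1
  hsign : θ g ^ (2 * h * (h + 1)) = (-1) ^ u
  ψ : AddChar F N
  ψ1 : ψ 1 ≠ 1
  c : N →+* N
  τ : N →+* N
  cc : ∀ x, c (c x) = x
  ττ : ∀ x, τ (τ x) = x
  cτ : ∀ x, c (τ x) = τ (c x)
  cθ : ∀ x, c (θ x) = θ x⁻¹
  cψ : ∀ x, c (ψ x) = ψ (-x)
  τθ : ∀ x, τ (θ x) = θ (φ x)⁻¹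
  τψ : ∀ x, τ (ψ x) = ψ x

lemma sum_range_periodic {M : Type*} [AddCommMonoid M] (n : ℕ) (f : ℕ → M)
    (hf : ∀ i, f (i + n) = f i) (j : ℕ) :
    ∑ i ∈ Finset.range n, f (i + j) = ∑ i ∈ Finset.range n, f i := by
  induction j with
  | zero => simp
  | succ j ih =>
    rw [← ih]
    cases n with
    | zero => simp
    | succ n =>
      rw [Finset.sum_range_succ, Finset.sum_range_succ' (fun i => f (i + j))]
      congr 1
      · apply Finset.sum_congr rfl; intro i _; congr 1; ring
      · rw [← hf (0 + j)]; congr 1; ring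

namespace Dat

variable {F N : Type} [Field F] [Fintype F] [Field N] (D : Dat F N)

lemma pow_card (x : F) (hx : x ≠ 0) : x ^ (4 * D.h * (D.h + 1)) = 1 := by
  obtain ⟨i, -, rfl⟩ := D.hg x hx
  rw [← pow_mul, D.hgo]; exact Dvd.intro_left i rfl

lemma φφ (x : F) : D.φ (D.φ x) = x := by
  rw [D.hφ, D.hφ, ← pow_mul, show (2 * D.h + 1) * (2 * D.h + 1) = 4 * D.h * (D.h+1) + 1 by ring,
    pow_succ]
  by_cases hx : x = 0
  · simp [hx]
  · rw [D.pow_card x hx, one_mul]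

lemma g_half : D.g ^ (2 * D.h * (D.h + 1)) = -1 := by
  have h1 : (D.g ^ (2 * D.h * (D.h + 1))) ^ 2 = 1 := by
    rw [← pow_mul, D.hgo]; exact dvd_of_eq (by ring)
  rw [sq] at h1
  rcases mul_self_eq_one_iff.mp h1 with h | h
  · exfalso
    rw [D.hgo] at h
    have := Nat.le_of_dvd (by have := D.hh; positivity) h
    have := D.hh
    nlinarith
  · exact h

/-- powers of the norm of the generator. -/
def e (i : ℕ) : F := D.g ^ ((2 * D.h + 2) * i)

lemma e_ne (i : ℕ) : D.e i ≠ 0 := pow_ne_zero _ D.g0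
lemma e_zero : D.e 0 = 1 := by simp [e]
lemma e_add (i j : ℕ) : D.e (i + j) = D.e i * D.e j := by simp [e, mul_add, pow_add]
lemma e_per (i : ℕ) : D.e (i + 2 * D.h) = D.e i := by
  rw [e_add]
  have : D.e (2 * D.h) = 1 := by
    rw [e, D.hgo]; exact dvd_of_eq (by ring)
  rw [this, mul_one]
lemma φ_e (i : ℕ) : D.φ (D.e i) = D.e i := by
  rw [D.hφ, e, ← pow_mul, show (2 * D.h + 2) * i * (2 * D.h + 1) =
    (4 * D.h * (D.h + 1)) * i + (2 * D.h + 2) * i by ring, pow_add, pow_mul D.g _ i,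
    D.pow_card _ D.g0, one_pow, one_mul]
lemma e_half : D.e D.h = -1 := by
  rw [e, ← D.g_half]; congr 1; ring

lemma e_inj {i j : ℕ} (hi : i < 2 * D.h) (hj : j < 2 * D.h) (hij : D.e i = D.e j) : i = j := by
  wlog hle : i ≤ j generalizing i j
  · exact (this hj hi hij.symm (by omega)).symm
  obtain ⟨k, rfl⟩ := Nat.exists_eq_add_of_le hle
  rw [e_add] at hij
  have h1 : D.e k = 1 := by
    have := D.e_ne i
    field_simp at hij
    exact hij.symm
  rw [e, D.hgo] at h1
  rw [show 4 * D.h * (D.h + 1) = (2 * D.h + 2) * (2 * D.h) by ring] at h1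
  have h2 := Nat.dvd_of_mul_dvd_mul_left (by omega) h1
  rcases Nat.eq_zero_or_pos k with h | h
  · omega
  · have := Nat.le_of_dvd h h2; omega

lemma fixed_eq (x : F) (hx : x ≠ 0) (hf : D.φ x = x) : ∃ i < 2 * D.h, x = D.e i := by
  obtain ⟨j, hj, rfl⟩ := D.hg x hx
  rw [D.hφ, ← pow_mul, show j * (2 * D.h + 1) = j * (2 * D.h) + j by ring, pow_add] at hf
  have h1 : D.g ^ (j * (2 * D.h)) = 1 := by
    have := pow_ne_zero j D.g0
    field_simp at hf
    exact hf
  rw [D.hgo, show 4 * D.h * (D.h + 1) = (2 * D.h + 2) * (2 * D.h) by ring] at h1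
  have h2 := Nat.dvd_of_mul_dvd_mul_right (by have := D.hh; omega) h1
  obtain ⟨k, rfl⟩ := h2
  refine ⟨k, ?_, rfl⟩
  have := D.hh
  by_contra hcon
  push Not at hcon
  have : (2 * D.h + 2) * (2 * D.h) ≤ (2 * D.h + 2) * k := Nat.mul_le_mul_left _ hcon
  nlinarith

/-- norm to the small field -/
def nm (x : F) : F := x * D.φ x
lemma φ_nm (x : F) : D.φ (D.nm x) = D.nm x := by simp [nm, D.φφ, mul_comm]
lemma nm_mul (x y : F) : D.nm (x * y) = D.nm x * D.nm y := by simp [nm]; ring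
lemma nm_g_pow (i : ℕ) : D.nm (D.g ^ i) = D.e i := by
  rw [nm, D.hφ, e, ← pow_mul, ← pow_add]; congr 1; ring
lemma nm_ne {x : F} (hx : x ≠ 0) : D.nm x ≠ 0 := mul_ne_zero hx (by simpa using hx)
lemma nm_eq_zero {x : F} : D.nm x = 0 ↔ x = 0 := by simp [nm]
lemma nm_neg (x : F) : D.nm (-x) = D.nm x := by simp [nm]

/-- trace zero elements -/
def Z : AddSubgroup F where
  carrier := {z | D.φ z = -z}
  zero_mem' := by simp
  add_mem' := by
    intro a b ha hb
    simp only [Set.mem_ofPred_eq] at *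
    rw [map_add, ha, hb]; ring
  neg_mem' := by
    intro a ha
    simp only [Set.mem_ofPred_eq] at *
    rw [map_neg, ha]

lemma mem_Z {z : F} : z ∈ D.Z ↔ D.φ z = -z := Iff.rfl

/-- fixed elements -/
def Fq : AddSubgroup F where
  carrier := {z | D.φ z = z}
  zero_mem' := by simp
  add_mem' := by
    intro a b ha hb
    simp only [Set.mem_ofPred_eq] at *
    rw [map_add, ha, hb]
  neg_mem' := by
    intro a ha
    simp only [Set.mem_ofPred_eq] at *
    rw [map_neg, ha]

lemma sum_sub (H : AddSubgroup F) (a : F) (ha : a ≠ 0) (h : a⁻¹ ∈ H) :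
    ∑ z : H, D.ψ (a * z) = 0 := by
  have h1 : ∑ z : H, D.ψ (a * z) = D.ψ 1 * ∑ z : H, D.ψ (a * z) := by
    rw [Finset.mul_sum]
    rw [← Equiv.sum_comp (Equiv.addLeft (⟨a⁻¹, h⟩ : H))]
    apply Finset.sum_congr rfl
    intro z _
    simp only [Equiv.coe_addLeft, AddSubgroup.coe_add]
    rw [mul_add, mul_inv_cancel₀ ha, AddChar.map_add_eq_mul]
  have h2 : (D.ψ 1 - 1) * ∑ z : H, D.ψ (a * z) = 0 := by
    rw [sub_mul, one_mul, ← h1, sub_self]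
  exact (mul_eq_zero.mp h2).resolve_left (sub_ne_zero.mpr D.ψ1)

lemma sum_F (a : F) (ha : a ≠ 0) : ∑ z : F, D.ψ (a * z) = 0 := by
  rw [← D.sum_sub ⊤ a ha (by simp)]
  exact (Fintype.sum_equiv (AddSubgroup.topEquiv (G := F)).toEquiv _ _ (fun x => rfl)).symm

lemma sum_Z (a : F) (ha : a ≠ 0) (h : a ∈ D.Z) : ∑ z : D.Z, D.ψ (a * z) = 0 := by
  apply D.sum_sub _ a ha
  rw [mem_Z] at *
  rw [map_inv₀, h, inv_neg]

lemma sum_e (x : F) (hx : x ≠ 0) (hf : D.φ x = x) :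
    ∑ i ∈ Finset.range (2 * D.h), D.ψ (x * D.e i) = -1 := by
  have h1 := D.sum_sub D.Fq x hx (by show D.φ x⁻¹ = x⁻¹; rw [map_inv₀, hf])
  have h2 : ∑ z ∈ (Finset.univ.filter (fun z : F => D.φ z = z)), D.ψ (x * z) = 0 := by
    rw [← h1]
    exact Finset.sum_subtype _ (by intro y; simp [Fq]) (fun z => D.ψ (x * z))
  have h3 : Finset.univ.filter (fun z : F => D.φ z = z) =
      insert 0 ((Finset.range (2 * D.h)).image D.e) := by
    ext z
    simp only [Finset.mem_filter, Finset.mem_univ, true_and, Finset.mem_insert, Finset.mem_image,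
      Finset.mem_range]
    constructor
    · intro h
      by_cases hz : z = 0
      · exact Or.inl hz
      · right
        obtain ⟨i, hi, rfl⟩ := D.fixed_eq z hz h
        exact ⟨i, hi, rfl⟩
    · rintro (rfl | ⟨i, hi, rfl⟩)
      · simp
      · exact D.φ_e i
  rw [h3, Finset.sum_insert, Finset.sum_image] at h2
  · simp only [mul_zero, AddChar.map_zero_eq_one] at h2
    linear_combination h2
  · intro i hi j hj hij
    simp only [Finset.coe_range, Set.mem_Iio] at hi hj
    exact D.e_inj hi hj hij
  · simp only [Finset.mem_image, not_exists, not_and]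
    intro i _
    exact D.e_ne i

/-- base point of the nonzero trace zero elements -/
def c1 : F := D.g ^ (D.h + 1)
lemma c1_ne : D.c1 ≠ 0 := pow_ne_zero _ D.g0
lemma c1_mem : D.c1 ∈ D.Z := by
  rw [mem_Z, D.hφ, c1, ← pow_mul, show (D.h + 1) * (2 * D.h + 1) = 2 * D.h * (D.h + 1) + (D.h + 1)
    by ring, pow_add, g_half]
  ring
lemma Z_mul {z a : F} (hz : z ∈ D.Z) (ha : D.φ a = a) : z * a ∈ D.Z := by
  rw [mem_Z] at *; rw [map_mul, hz, ha]; ring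
lemma Z_eq {z : F} (hz : z ∈ D.Z) (h0 : z ≠ 0) : ∃ i < 2 * D.h, z = D.c1 * D.e i := by
  have h1 := D.c1_ne
  have h2 := D.c1_mem
  rw [mem_Z] at hz h2
  obtain ⟨i, hi, h⟩ := D.fixed_eq (z / D.c1) (div_ne_zero h0 h1) (by
    rw [map_div₀, hz, h2, neg_div_neg_eq])
  refine ⟨i, hi, ?_⟩
  rw [← h]; field_simp

/-- nonzero trace zero elements -/
abbrev Zs : Type := {c : F // c ∈ D.Z ∧ c ≠ 0}

def zsEquiv : Fin (2 * D.h) ≃ D.Zs := by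
  refine Equiv.ofBijective (fun i => ⟨D.c1 * D.e i, D.Z_mul D.c1_mem (D.φ_e _),
    mul_ne_zero D.c1_ne (D.e_ne _)⟩) ⟨?_, ?_⟩
  · intro i j hij
    simp only [Subtype.mk.injEq] at hij
    exact Fin.ext (D.e_inj i.2 j.2 (mul_left_cancel₀ D.c1_ne hij))
  · rintro ⟨c, hc, h0⟩
    obtain ⟨i, hi, rfl⟩ := D.Z_eq hc h0
    exact ⟨⟨i, hi⟩, rfl⟩

lemma card_Zs : Fintype.card D.Zs = 2 * D.h := by
  rw [← Fintype.card_congr D.zsEquiv, Fintype.card_fin]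

lemma card_Z : Fintype.card D.Z = 2 * D.h + 1 := by
  rw [← D.card_Zs, ← Fintype.card_option]
  refine Fintype.card_congr ⟨fun z => if h : (z : F) = 0 then none else some ⟨z, z.2, h⟩,
    fun o => match o with | none => 0 | some c => ⟨c.1, c.2.1⟩, ?_, ?_⟩
  · intro z
    by_cases h : (z : F) = 0
    · simp only [h, dite_true]; exact Subtype.ext h.symm
    · simp [h]
  · intro o
    match o with
    | none => simp
    | some c => simp [c.2.2]

/-- the Gauss sum on the small field -/
def ga (β : N) : N := ∑ i ∈ Finset.range (2 * D.h), β ^ i * D.ψ (D.e i)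

lemma ga_shift (β : N) (hβ : β ^ (2 * D.h) = 1) (j : ℕ) :
    β ^ j * ∑ i ∈ Finset.range (2 * D.h), β ^ i * D.ψ (D.e j * D.e i) = D.ga β := by
  rw [Finset.mul_sum, ga, ← sum_range_periodic _ (fun i => β ^ i * D.ψ (D.e i)) _ j]
  · apply Finset.sum_congr rfl
    intro i _
    rw [D.e_add, pow_add, mul_comm (D.e i)]; ring
  · intro i
    simp only [D.e_per, pow_add, hβ, mul_one]

lemma ga_norm (β : N) (hβ : β ^ (2 * D.h) = 1) (h1 : β ≠ 1) (hc : D.c β = β⁻¹) :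
    D.ga β * D.c (D.ga β) = 2 * D.h + 1 := by
  have hβ0 : β ≠ 0 := by
    rintro rfl
    have := D.hh
    rw [zero_pow (by omega)] at hβ
    exact zero_ne_one hβ
  have hgeo : ∑ i ∈ Finset.range (2 * D.h), β ^ i = 0 := by
    have := mul_neg_geom_sum β (2 * D.h)
    rw [hβ, sub_self] at this
    exact (mul_eq_zero.mp this).resolve_left (sub_ne_zero.mpr h1.symm)
  have e1 : D.c (D.ga β) = ∑ j ∈ Finset.range (2 * D.h), (β ^ j)⁻¹ * D.ψ (-D.e j) := by
    simp only [ga, map_sum, map_mul, map_pow, hc, D.cψ, inv_pow]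
  have e2 : D.ga β * D.c (D.ga β) = ∑ j ∈ Finset.range (2 * D.h), ∑ i ∈ Finset.range (2 * D.h),
      β ^ i * D.ψ ((D.e i - 1) * D.e j) := by
    rw [e1, Finset.mul_sum]
    apply Finset.sum_congr rfl
    intro j _
    rw [← D.ga_shift β hβ j, mul_mul_mul_comm, mul_inv_cancel₀ (pow_ne_zero _ hβ0), one_mul,
      Finset.sum_mul]
    apply Finset.sum_congr rfl
    intro i _
    rw [mul_assoc, ← AddChar.map_add_eq_mul]
    congr 2; ring
  rw [e2, Finset.sum_comm]
  simp only [← Finset.mul_sum]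
  obtain ⟨k, hk⟩ : ∃ k, 2 * D.h = k + 1 := ⟨2 * D.h - 1, by have := D.hh; omega⟩
  have e3 : ∀ i ∈ Finset.range (2 * D.h), i ≠ 0 → β ^ i *
      ∑ j ∈ Finset.range (2 * D.h), D.ψ ((D.e i - 1) * D.e j) = - β ^ i := by
    intro i hi h0
    rw [D.sum_e]
    · ring
    · intro hcon
      rw [sub_eq_zero, ← D.e_zero] at hcon
      exact h0 (D.e_inj (Finset.mem_range.mp hi) (by have := D.hh; omega) hcon)
    · rw [map_sub, map_one, D.φ_e]
  have e4 : (2 * D.h : N) = ((2 * D.h : ℕ) : N) := by push_cast; rfl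
  rw [e4]
  rw [hk] at e3 hgeo ⊢
  rw [Finset.sum_range_succ'] at hgeo ⊢
  rw [Finset.sum_congr rfl (fun i hi => e3 (i+1) (by simpa using hi) (by omega))]
  simp only [D.e_zero, sub_self, zero_mul, AddChar.map_zero_eq_one, pow_zero, Finset.sum_neg_distrib]
  rw [eq_neg_of_add_eq_zero_left hgeo]
  simp
  ring

end Dat
end PartOne

section PartTwo

open scoped Classical

namespace Dat

variable {F N : Type} [Field F] [Fintype F] [Field N] (D : Dat F N)

/-- partial Fourier transform of the multiplicative character -/
def K (b r : F) : N := ∑ z : D.Z, D.ψ (b * z) * D.θ (z - r / 2)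

lemma K_scale (a b r : F) (ha : a ≠ 0) (hf : D.φ a = a) :
    D.K b (a * r) = D.θ a * D.K (b * a) r := by
  rw [K, K, Finset.mul_sum]
  have ha' : D.φ a⁻¹ = a⁻¹ := by rw [map_inv₀, hf]
  let e : D.Z ≃ D.Z := ⟨fun z => ⟨z * a, D.Z_mul z.2 hf⟩, fun z => ⟨z * a⁻¹, D.Z_mul z.2 ha'⟩,
    fun z => Subtype.ext (by simp [ha]), fun z => Subtype.ext (by simp [ha])⟩
  rw [← Equiv.sum_comp e]
  apply Finset.sum_congr rfl
  intro z _
  have h1 : ((e z : D.Z) : F) = z * a := rfl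
  rw [h1, show (z : F) * a - a * r / 2 = a * (z - r / 2) by ring, map_mul D.θ,
    show b * (z * a) = b * a * z by ring]
  ring

/-- eigenvalues for the linear characters -/
def lam (b : F) : N := ∑ y, D.ψ (b * y) * D.K 0 (D.nm y)

lemma lam_scale (a b : F) (ha : a ≠ 0) : D.lam b = D.θ (D.nm a) * D.lam (b * a) := by
  rw [lam, lam, Finset.mul_sum, ← Equiv.sum_comp (Equiv.mulLeft₀ a ha)]
  apply Finset.sum_congr rfl
  intro y _
  have hmul : ∀ y, Equiv.mulLeft₀ a ha y = a * y := fun _ => rfl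
  simp only [hmul]
  rw [D.nm_mul, D.K_scale _ _ _ (D.nm_ne ha) (D.φ_nm a), zero_mul, mul_assoc b a y]
  ring

/-- the small root of unity -/
def t : N := D.θ D.g ^ (2 * D.h + 2)

lemma θ_e (i : ℕ) : D.θ (D.e i) = D.t ^ i := by
  rw [e, t, map_pow, pow_mul]

lemma θ_ne {x : F} (hx : x ≠ 0) : D.θ x ≠ 0 := by
  have : IsUnit (D.θ x) := (Ne.isUnit hx).map D.θ
  exact this.ne_zero

lemma t_ne : D.t ≠ 0 := pow_ne_zero _ (D.θ_ne D.g0)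

lemma t_h : D.t ^ D.h = (-1) ^ D.u := by
  rw [← D.hsign, t, ← pow_mul]; congr 1; ring

lemma t_2h : D.t ^ (2 * D.h) = 1 := by
  rw [mul_comm, pow_mul, t_h, ← pow_mul, mul_comm, pow_mul]; simp

lemma lam_zero : D.lam 0 = 0 := by
  have h := D.lam_scale D.g 0 D.g0
  have h1 : D.nm D.g = D.e 1 := by simpa using D.nm_g_pow 1
  rw [zero_mul, h1, D.θ_e, pow_one] at h
  have h2 : (1 - D.t) * D.lam 0 = 0 := by linear_combination h
  exact (mul_eq_zero.mp h2).resolve_left (sub_ne_zero.mpr D.ht.symm)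

lemma lam_g (i : ℕ) (b : F) : D.lam b = D.t ^ i * D.lam (b * D.g ^ i) := by
  rw [D.lam_scale (D.g ^ i) b (pow_ne_zero _ D.g0), D.nm_g_pow, D.θ_e]

/-- the alternating form -/
def br (y y' : F) : F := (D.φ y * y' - y * D.φ y') / 2

lemma br_mem (y y' : F) : D.br y y' ∈ D.Z := by
  rw [mem_Z, br]
  simp only [map_div₀, map_sub, map_mul, D.φφ, map_ofNat]
  ring

def Ah (b : F) : Matrix F F N := fun y y' => D.ψ (-(b * D.br y y')) * D.K b (D.nm (y - y'))

def dC (b : F) : N := (D.Ah b).det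

lemma θ_pow_card (x : F) : D.θ x ^ ((2 * D.h + 1) ^ 2) = D.θ x := by
  rw [← map_pow, ← D.card, FiniteField.pow_card]

lemma dC_scale (a b : F) (ha : a ≠ 0) : D.dC b = D.θ (D.nm a) * D.dC (b * D.nm a) := by
  have h1 : D.dC b = ((D.Ah b).submatrix (Equiv.mulLeft₀ a ha) (Equiv.mulLeft₀ a ha)).det := by
    rw [Matrix.det_submatrix_equiv_self, dC]
  have h2 : (D.Ah b).submatrix (Equiv.mulLeft₀ a ha) (Equiv.mulLeft₀ a ha) =
      D.θ (D.nm a) • D.Ah (b * D.nm a) := by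
    ext y y'
    have hmul : ∀ y, Equiv.mulLeft₀ a ha y = a * y := fun _ => rfl
    simp only [Matrix.submatrix_apply, hmul, Matrix.smul_apply, smul_eq_mul, Ah]
    rw [← mul_sub, D.nm_mul, D.K_scale _ _ _ (D.nm_ne ha) (D.φ_nm a)]
    rw [show b * D.br (a * y) (a * y') = b * D.nm a * D.br y y' by simp [br, nm]; ring]
    ring
  rw [h1, h2, Matrix.det_smul, D.card, θ_pow_card, dC]

lemma dC_e (i : ℕ) (b : F) : D.dC b = D.t ^ i * D.dC (b * D.e i) := by
  rw [D.dC_scale (D.g ^ i) b (pow_ne_zero _ D.g0), D.nm_g_pow, D.θ_e]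

lemma sum_id (n : ℕ) : ∑ i ∈ Finset.range (2 * n), i = n * (2 * n - 1) := by
  rw [Finset.sum_range_id, mul_assoc, Nat.mul_div_cancel_left _ (by norm_num)]

lemma sgn_odd (u k : ℕ) (hk : Odd k) : (((-1 : N) ^ u)) ^ k = (-1) ^ u := by
  rw [← pow_mul, mul_comm, pow_mul, hk.neg_one_pow]

lemma prod_dC : ∏ b : D.Zs, D.dC b = (-1) ^ D.u * D.dC D.c1 ^ (2 * D.h) := by
  rw [← Equiv.prod_comp D.zsEquiv]
  have h1 : ∏ i : Fin (2 * D.h), D.dC (D.zsEquiv i) =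
      ∏ i ∈ Finset.range (2 * D.h), D.dC (D.c1 * D.e i) :=
    Fin.prod_univ_eq_prod_range (fun i => D.dC (D.c1 * D.e i)) _
  rw [h1]
  have h2 : ∏ i ∈ Finset.range (2 * D.h), (D.t ^ i * D.dC (D.c1 * D.e i)) =
      D.dC D.c1 ^ (2 * D.h) := by
    rw [Finset.prod_congr rfl (fun i _ => (D.dC_e i D.c1).symm)]
    simp
  have hh := D.hh
  rw [Finset.prod_mul_distrib, Finset.prod_pow_eq_pow_sum, sum_id, pow_mul, D.t_h,
    sgn_odd _ _ (by rw [Nat.odd_iff]; omega)] at h2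
  rw [← h2, ← mul_assoc, ← mul_pow]; simp

lemma prod_lam : ∏ b : Fˣ, D.lam b = D.lam 1 ^ (4 * D.h * (D.h + 1)) := by
  have hb : Function.Bijective (fun i : Fin (4 * D.h * (D.h + 1)) => (Units.mk0 D.g D.g0) ^ (i : ℕ)) := by
    constructor
    · intro i j hij
      have h1 : orderOf D.g = 4 * D.h * (D.h + 1) := by
        apply Nat.dvd_antisymm
        · exact orderOf_dvd_of_pow_eq_one ((D.hgo _).mpr dvd_rfl)
        · exact (D.hgo _).mp (pow_orderOf_eq_one _)
      have h2 := congrArg (Units.val) hij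
      simp only [Units.val_pow_eq_pow_val, Units.val_mk0] at h2
      exact Fin.ext (pow_injOn_Iio_orderOf (by simp [h1]) (by simp [h1]) h2)
    · intro x
      obtain ⟨i, hi, h⟩ := D.hg x x.ne_zero
      exact ⟨⟨i, hi⟩, Units.ext (by simp [h])⟩
  rw [← Equiv.prod_comp (Equiv.ofBijective _ hb)]
  have h1 : ∏ i : Fin (4 * D.h * (D.h + 1)), D.lam (((Equiv.ofBijective _ hb) i : Fˣ) : F) =
      ∏ i ∈ Finset.range (4 * D.h * (D.h + 1)), D.lam (1 * D.g ^ i) := by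
    rw [← Fin.prod_univ_eq_prod_range (fun i => D.lam (1 * D.g ^ i))]
    apply Finset.prod_congr rfl
    intro i _
    simp
  rw [h1]
  have h2 : ∏ i ∈ Finset.range (4 * D.h * (D.h + 1)), (D.t ^ i * D.lam (1 * D.g ^ i)) =
      D.lam 1 ^ (4 * D.h * (D.h + 1)) := by
    rw [Finset.prod_congr rfl (fun i _ => (D.lam_g i 1).symm)]
    simp
  have h3 : ∑ i ∈ Finset.range (4 * D.h * (D.h + 1)), i =
      (2 * D.h) * ((D.h + 1) * (4 * D.h * (D.h + 1) - 1)) := by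
    rw [show 4 * D.h * (D.h + 1) = 2 * (2 * D.h * (D.h + 1)) by ring, sum_id]; ring
  rw [Finset.prod_mul_distrib, Finset.prod_pow_eq_pow_sum, h3, pow_mul, D.t_2h, one_pow,
    one_mul] at h2
  exact h2

/-- index set of the isotropic lines -/
abbrev Lam : Type := Option (F × D.Z)

/-- the hermitian pairing on representatives -/
def hp : D.Lam → D.Lam → F
  | none, none => 0
  | none, some _ => 1
  | some _, none => 1
  | some (y, z), some (y', z') => (z' - z) - D.nm (y - y') / 2 + D.br y y'

def A : Matrix D.Lam D.Lam N := fun x y => D.θ (D.hp x y)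

/-- index set after Fourier transform -/
abbrev Idx : Type := Option F ⊕ (F × D.Zs)

def F1 : Matrix D.Lam D.Idx N
  | none, Sum.inl none => 1
  | none, Sum.inl (some _) => 0
  | none, Sum.inr _ => 0
  | some _, Sum.inl none => 0
  | some (y, _), Sum.inl (some b) => D.ψ (b * y)
  | some (y, z), Sum.inr (y', c) => if y = y' then D.ψ (c * z) else 0

def F1' : Matrix D.Idx D.Lam N
  | Sum.inl none, none => 1
  | Sum.inl (some _), none => 0
  | Sum.inr _, none => 0
  | Sum.inl none, some _ => 0
  | Sum.inl (some b), some (y, _) => ((2 * D.h + 1 : N) ^ 3)⁻¹ * D.ψ (-(b * y))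
  | Sum.inr (y', c), some (y, z) => if y = y' then (2 * D.h + 1 : N)⁻¹ * D.ψ (-(c * z)) else 0

def dd : Option F → N
  | none => 1
  | some b => if b = 0 then (2 * D.h + 1) ^ 3 else D.lam b

def At : Matrix D.Idx D.Idx N :=
  Matrix.fromBlocks ((Matrix.diagonal D.dd).submatrix (Equiv.swap none (some 0)) id) 0 0
    (Matrix.blockDiagonal (fun c : D.Zs => D.Ah c))

lemma prod_dd : ∏ b : F, D.dd (some b) = (2 * D.h + 1) ^ 3 * ∏ b : Fˣ, D.lam b := by
  rw [← Finset.mul_prod_erase Finset.univ _ (Finset.mem_univ (0 : F))]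
  congr 1
  · simp [dd]
  · symm
    refine Finset.prod_bij (fun x _ => (x : F)) ?_ ?_ ?_ ?_
    · intro a _; simp
    · intro a _ b _ h; exact Units.ext h
    · intro b hb
      simp only [Finset.mem_erase, Finset.mem_univ, and_true] at hb
      exact ⟨Units.mk0 b hb, by simp, by simp⟩
    · intro a _; simp [dd]

lemma det_At : D.At.det = - (2 * D.h + 1) ^ 3 * D.lam 1 ^ (4 * D.h * (D.h + 1)) *
    ((-1) ^ D.u * D.dC D.c1 ^ (2 * D.h)) := by
  rw [At, Matrix.det_fromBlocks_zero₂₁, Matrix.det_permute, Matrix.det_diagonal,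
    Matrix.det_blockDiagonal, Equiv.Perm.sign_swap (by simp), Fintype.prod_option, prod_dd,
    prod_lam]
  have := D.prod_dC
  simp only [dC] at this ⊢
  rw [this]
  simp [dd]

lemma card_Lam : Fintype.card D.Lam = (2 * D.h + 1) ^ 3 + 1 := by
  rw [Fintype.card_option, Fintype.card_prod, D.card, D.card_Z]; ring

lemma card_Idx : Fintype.card D.Idx = Fintype.card D.Lam := by
  rw [D.card_Lam, Fintype.card_sum, Fintype.card_option, Fintype.card_prod, D.card, D.card_Zs]; ring

lemma sum_F' (b : F) : ∑ y : F, D.ψ (b * y) = if b = 0 then (2 * D.h + 1 : N) ^ 2 else 0 := by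
  split_ifs with h
  · subst h
    simp only [zero_mul, AddChar.map_zero_eq_one, Finset.sum_const, Finset.card_univ, D.card]
    simp
  · exact D.sum_F b h

lemma sum_Z' (b : F) (hb : b ∈ D.Z) :
    ∑ z : D.Z, D.ψ (b * z) = if b = 0 then (2 * D.h + 1 : N) else 0 := by
  split_ifs with h
  · subst h
    simp only [zero_mul, AddChar.map_zero_eq_one, Finset.sum_const, Finset.card_univ, D.card_Z]
    simp
  · exact D.sum_Z b h hb

variable [CharZero N]

lemma q_ne : (2 * D.h + 1 : N) ≠ 0 := by
  have : ((2 * D.h + 1 : ℕ) : N) ≠ 0 := Nat.cast_ne_zero.mpr (by omega)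
  simpa using this

lemma F1'_F1 : D.F1' * D.F1 = 1 := by
  have hq := D.q_ne
  ext i j
  rw [Matrix.mul_apply, Fintype.sum_option, Fintype.sum_prod_type]
  match i, j with
  | Sum.inl none, Sum.inl none => simp [F1, F1']
  | Sum.inl none, Sum.inl (some b) => simp [F1, F1']
  | Sum.inl none, Sum.inr (y, c) => simp [F1, F1']
  | Sum.inl (some b), Sum.inl none => simp [F1, F1']
  | Sum.inl (some b), Sum.inl (some b') =>
    simp only [F1, F1', zero_mul, zero_add, Finset.sum_const, Finset.card_univ, D.card_Z]
    have h1 : ∀ y, ((2 * D.h + 1 : N) ^ 3)⁻¹ * D.ψ (-(b * y)) * D.ψ (b' * y) =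
      ((2 * D.h + 1 : N) ^ 3)⁻¹ * D.ψ ((b' - b) * y) := by
      intro y
      rw [mul_assoc, ← AddChar.map_add_eq_mul]; congr 2; ring
    simp only [h1, ← Finset.smul_sum, ← Finset.mul_sum, D.sum_F', Matrix.one_apply, sub_eq_zero,
      Sum.inl.injEq, Option.some.injEq]
    by_cases h : b = b'
    · subst h; simp; field_simp
    · simp [h, Ne.symm h]
  | Sum.inl (some b), Sum.inr (y, c) =>
    simp only [F1, F1', zero_mul, zero_add, mul_ite, mul_zero]
    rw [Finset.sum_eq_single y]
    · simp only [if_true, ← Finset.mul_sum]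
      rw [D.sum_Z c c.2.2 c.2.1]; simp
    · intro y' _ h; simp [h]
    · simp
  | Sum.inr (y, c), Sum.inl none => simp [F1, F1']
  | Sum.inr (y, c), Sum.inl (some b) =>
    simp only [F1, F1', zero_mul, zero_add, ite_mul]
    rw [Finset.sum_eq_single y]
    · simp only [if_true, ← Finset.mul_sum, ← Finset.sum_mul, ← neg_mul]
      rw [D.sum_Z _ (neg_ne_zero.mpr c.2.2) (neg_mem c.2.1)]; simp
    · intro y' _ h; simp [h]
    · simp
  | Sum.inr (y, c), Sum.inr (y', c') =>
    simp only [F1, F1', zero_mul, zero_add, ite_mul]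
    rw [Finset.sum_eq_single y]
    · simp only [if_true]
      by_cases hy : y = y'
      · subst hy
        have h1 : ∀ z : D.Z, (2 * D.h + 1 : N)⁻¹ * D.ψ (-(c * z)) * D.ψ (c' * z) =
          (2 * D.h + 1 : N)⁻¹ * D.ψ ((c' - c) * z) := by
          intro y
          rw [mul_assoc, ← AddChar.map_add_eq_mul]; congr 2; ring
        simp only [if_true, h1, ← Finset.mul_sum]
        rw [D.sum_Z' _ (sub_mem c'.2.1 c.2.1)]
        by_cases h : c = c'
        · subst h; simp [hq]
        · have : (c' : F) - c ≠ 0 := fun hc => h (Subtype.ext (sub_eq_zero.mp hc).symm)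
          simp [this, Matrix.one_apply, h]
      · simp [hy, Matrix.one_apply]
    · intro y' _ h; simp [h]
    · simp

lemma F1_F1' : D.F1 * D.F1' = 1 :=
  (Matrix.mul_eq_one_comm_of_card_eq _ _ _ D.card_Idx).mp D.F1'_F1

/-- summing over a coset of `Z`. -/
lemma sum_shift (b : F) (w r : F) (hw : w ∈ D.Z) :
    ∑ z : D.Z, D.ψ (b * z) * D.θ (z + w - r / 2) = D.ψ (-(b * w)) * D.K b r := by
  rw [K, Finset.mul_sum, ← Equiv.sum_comp (Equiv.addRight (-(⟨w, hw⟩ : D.Z)))]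
  apply Finset.sum_congr rfl
  intro z _
  simp only [Equiv.coe_addRight, AddSubgroup.coe_add, AddSubgroup.coe_neg]
  rw [← mul_assoc, ← AddChar.map_add_eq_mul]
  congr 2 <;> ring

lemma A_F1 : D.A * D.F1 = D.F1 * D.At := by
  have hq := D.q_ne
  have hlam := D.lam_zero
  ext i j
  rw [Matrix.mul_apply, Fintype.sum_option, Fintype.sum_prod_type, Matrix.mul_apply,
    Fintype.sum_sum_type, Fintype.sum_option]
  match i, j with
  | none, Sum.inl none =>
    simp [A, hp, F1, At, Matrix.diagonal_apply, MulChar.map_zero]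
  | none, Sum.inl (some b) =>
    simp only [F1, A, hp, At, map_one, one_mul, mul_zero, zero_add, zero_mul,
      Finset.sum_const_zero, add_zero, Finset.sum_const, Finset.card_univ, D.card_Z,
      ← Finset.smul_sum, D.sum_F', Matrix.fromBlocks_apply₁₁, Matrix.submatrix_apply,
      Equiv.swap_apply_left, Matrix.diagonal_apply, id, Option.some.injEq]
    by_cases h : b = 0
    · subst h; simp [dd]; ring
    · simp [h, Ne.symm h]
  | none, Sum.inr (y', c) =>
    simp only [F1, A, hp, At, map_one, one_mul, mul_zero, zero_add, zero_mul,
      Finset.sum_const_zero, add_zero, Matrix.fromBlocks_apply₁₂, Matrix.zero_apply]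
    rw [Finset.sum_eq_single y']
    · simp only [if_true]
      exact D.sum_Z c c.2.2 c.2.1
    · intro y _ h; simp [h]
    · simp
  | some (y, z), Sum.inl none =>
    simp only [F1, A, hp, At, map_one, one_mul, mul_zero, zero_add, zero_mul,
      Finset.sum_const_zero, add_zero, Matrix.fromBlocks_apply₁₁, Matrix.fromBlocks_apply₂₁,
      Matrix.zero_apply, Matrix.submatrix_apply, Matrix.diagonal_apply, id]
    rw [Finset.sum_eq_single 0]
    · simp [dd]
    · intro b _ hb
      rw [Equiv.swap_apply_of_ne_of_ne (by simp) (by simpa using hb)]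
      simp
    · simp
  | some (y, z), Sum.inl (some b) =>
    simp only [F1, A, hp, At, map_one, one_mul, mul_zero, zero_add, zero_mul,
      Finset.sum_const_zero, add_zero, Matrix.fromBlocks_apply₁₁, Matrix.fromBlocks_apply₂₁,
      Matrix.zero_apply, Matrix.submatrix_apply, Matrix.diagonal_apply, id]
    have h1 : ∀ y' : F, ∑ z' : D.Z, D.θ ((z' - z : F) - D.nm (y - y') / 2 + D.br y y') * D.ψ (b * y')
        = D.ψ (b * y') * D.K 0 (D.nm (y - y')) := by
      intro y'
      have h2 := D.sum_shift 0 (- z + D.br y y') (D.nm (y - y')) (add_mem (neg_mem z.2) (D.br_mem _ _))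
      simp only [zero_mul, neg_zero, AddChar.map_zero_eq_one, one_mul] at h2
      rw [← h2, Finset.mul_sum]
      apply Finset.sum_congr rfl
      intro z' _
      rw [mul_comm]; congr 2; ring
    simp only [h1]
    have h3 : ∑ y' : F, D.ψ (b * y') * D.K 0 (D.nm (y - y')) = D.ψ (b * y) * D.lam b := by
      rw [lam, Finset.mul_sum, ← Equiv.sum_comp (Equiv.addRight y)]
      apply Finset.sum_congr rfl
      intro x _
      simp only [Equiv.coe_addRight]
      rw [show y - (x + y) = -x by ring, D.nm_neg, mul_add, AddChar.map_add_eq_mul]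
      ring
    rw [h3, Finset.sum_eq_single b]
    · by_cases hb : b = 0
      · subst hb; simp [hlam]
      · rw [Equiv.swap_apply_of_ne_of_ne (by simp) (by simpa using hb)]
        simp [dd, hb]
    · intro b' _ hb'
      by_cases hb : b' = 0
      · subst hb; simp
      · rw [Equiv.swap_apply_of_ne_of_ne (by simp) (by simpa using hb)]
        simp [hb']
    · simp
  | some (y, z), Sum.inr (y', c) =>
    simp only [F1, A, hp, At, map_one, one_mul, mul_zero, zero_add, zero_mul,
      Finset.sum_const_zero, add_zero, Matrix.fromBlocks_apply₁₂, Matrix.fromBlocks_apply₂₂,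
      Matrix.zero_apply, Matrix.blockDiagonal_apply]
    rw [Finset.sum_eq_single y' (by intro y'' _ h; simp [h]) (by simp),
      Finset.sum_eq_single (y, c)]
    · simp only [if_true]
      have h2 := D.sum_shift c (- z + D.br y y') (D.nm (y - y')) (add_mem (neg_mem z.2) (D.br_mem _ _))
      rw [Ah, ← mul_assoc, ← AddChar.map_add_eq_mul]
      rw [show c * (z : F) + -(c * D.br y y') = -(c * (- z + D.br y y')) by ring, ← h2]
      apply Finset.sum_congr rfl
      intro z' _
      rw [mul_comm]; congr 2; ring
    · rintro ⟨y'', c''⟩ _ h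
      simp only
      by_cases hy : y = y''
      · subst hy
        have : c'' ≠ c := fun hc => h (by rw [hc])
        simp [this]
      · simp [hy]
    · simp

lemma det_A : D.A.det = - (2 * D.h + 1) ^ 3 * D.lam 1 ^ (4 * D.h * (D.h + 1)) *
    ((-1) ^ D.u * D.dC D.c1 ^ (2 * D.h)) := by
  rw [← D.det_At]
  have : D.A = D.F1 * D.At * D.F1' := by
    rw [← D.A_F1, Matrix.mul_assoc, D.F1_F1', Matrix.mul_one]
  rw [this, Matrix.det_conj_of_mul_eq_one D.F1_F1' D.F1'_F1]

end Dat
end PartTwo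

section PartThree

open scoped Classical

namespace Dat

variable {F N : Type} [Field F] [Fintype F] [Field N] (D : Dat F N)

/-- representatives of isotropic lines -/
def vec : D.Lam → Fin 3 → F
  | none => ![1, 0, 0]
  | some (y, z) => ![z - D.nm y / 2, y, 1]

/-- the hermitian form -/
def hf (v w : Fin 3 → F) : F := D.φ (v 0) * w 2 + D.φ (v 1) * w 1 + D.φ (v 2) * w 0

lemma hf_smul (a b : F) (v w : Fin 3 → F) : D.hf (a • v) (b • w) = D.φ a * b * D.hf v w := by
  simp [hf]; ring

lemma half_add (D : Dat F N) (x : F) : x / 2 + x / 2 = x := by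
  have := D.two
  field_simp; ring

lemma hf_vec (x y : D.Lam) : D.hf (D.vec x) (D.vec y) = D.hp x y := by
  match x, y with
  | none, none => simp [hf, vec, hp]
  | none, some (y, z) => simp [hf, vec, hp]
  | some (y, z), none => simp [hf, vec, hp]
  | some (y, z), some (y', z') =>
    have h1 : D.φ z = - z := z.2
    have := D.two
    have h2 : D.φ 2 = 2 := map_ofNat _ _
    simp [hf, vec, hp, h1, h2, br, D.φ_nm]
    simp [nm]
    field_simp
    ring

lemma hp_self (x : D.Lam) : D.hp x x = 0 := by
  match x with
  | none => rfl
  | some (y, z) => simp [hp, nm, br, mul_comm]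

lemma φ_hp (x y : D.Lam) : D.φ (D.hp x y) = D.hp y x := by
  rw [← hf_vec, ← hf_vec]
  simp [hf, D.φφ]; ring

lemma vec_ne (x : D.Lam) : D.vec x ≠ 0 := by
  match x with
  | none => intro h; have := congrFun h 0; simp [vec] at this
  | some (y, z) => intro h; have := congrFun h 2; simp [vec] at this

lemma exists_vec (v : Fin 3 → F) (h0 : v ≠ 0) (hv : D.hf v v = 0) :
    ∃ (a : F) (x : D.Lam), a ≠ 0 ∧ v = a • D.vec x := by
  by_cases h2 : v 2 = 0
  · have h1 : v 1 = 0 := by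
      simp [hf, h2] at hv; exact hv
    refine ⟨v 0, none, ?_, ?_⟩
    · intro h
      apply h0
      ext i; fin_cases i <;> simp [h, h1, h2]
    · ext i; fin_cases i <;> simp [vec, h1, h2]
  · have h2' : D.φ (v 2) ≠ 0 := by simpa using h2
    have hz : v 0 / v 2 + D.nm (v 1 / v 2) / 2 ∈ D.Z := by
      rw [mem_Z, map_add, map_div₀ D.φ (D.nm _), D.φ_nm, map_ofNat, eq_neg_iff_add_eq_zero]
      have : D.φ (v 0 / v 2) + D.nm (v 1 / v 2) / 2 + (v 0 / v 2 + D.nm (v 1 / v 2) / 2) =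
        D.φ (v 0 / v 2) + v 0 / v 2 + D.nm (v 1 / v 2) := by
        linear_combination D.half_add (D.nm (v 1 / v 2))
      rw [this]
      simp only [nm, map_div₀]
      simp only [hf] at hv
      field_simp
      linear_combination hv
    refine ⟨v 2, some (v 1 / v 2, ⟨_, hz⟩), h2, ?_⟩
    ext i; fin_cases i
    · simp [vec]; field_simp
    · simp [vec]; field_simp
    · simp [vec]

lemma vec_inj {a b : F} {x y : D.Lam} (ha : a ≠ 0) (hb : b ≠ 0) (h : a • D.vec x = b • D.vec y) :
    a = b ∧ x = y := by
  have e0 := congrFun h 0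
  have e1 := congrFun h 1
  have e2 := congrFun h 2
  match x, y with
  | none, none => simp [vec] at e0; exact ⟨e0, rfl⟩
  | none, some (y, z) => simp [vec] at e2; exact absurd e2.symm hb
  | some (y, z), none => simp [vec] at e2; exact absurd e2 ha
  | some (y, z), some (y', z') =>
    simp [vec] at e0 e1 e2
    subst e2
    have e1 : y = y' := mul_left_cancel₀ ha e1
    subst e1
    have e0 := mul_left_cancel₀ ha e0
    refine ⟨rfl, ?_⟩
    simp at e0
    rw [e0]

end Dat

/-- A group acting through unitary matrices, with enough elements. -/
structure Grp {F N : Type} [Field F] [Fintype F] [Field N] (D : Dat F N) (G : Type) [Group G] where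
  mat : G →* Matrix (Fin 3) (Fin 3) F
  pres : ∀ g v w, D.hf (mat g *ᵥ v) (mat g *ᵥ w) = D.hf v w
  hU : ∀ (y z : F), z ∈ D.Z → ∃ g, mat g = !![1, - D.φ y, z - D.nm y / 2; 0, 1, y; 0, 0, 1]
  hW : ∃ g, mat g = !![0, 0, 1; 0, -1, 0; 1, 0, 0]
  hT : ∀ a : F, a ≠ 0 → ∃ g, mat g = !![a, 0, 0; 0, D.φ a / a, 0; 0, 0, (D.φ a)⁻¹]

namespace Grp

variable {F N : Type} [Field F] [Fintype F] [Field N] {D : Dat F N} {G : Type} [Group G]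
  (X : Grp D G)

lemma mat_inj (g : G) (v : Fin 3 → F) (h : X.mat g *ᵥ v = 0) : v = 0 := by
  have : X.mat g⁻¹ *ᵥ (X.mat g *ᵥ v) = v := by
    rw [Matrix.mulVec_mulVec, ← map_mul]; simp
  rw [← this, h, Matrix.mulVec_zero]

lemma ex (g : G) (x : D.Lam) : ∃ (a : F) (y : D.Lam), a ≠ 0 ∧ X.mat g *ᵥ D.vec x = a • D.vec y := by
  apply D.exists_vec
  · intro h; exact D.vec_ne x (X.mat_inj g _ h)
  · rw [X.pres, D.hf_vec, D.hp_self]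

def mu (g : G) (x : D.Lam) : F := (X.ex g x).choose
def act (g : G) (x : D.Lam) : D.Lam := (X.ex g x).choose_spec.choose
lemma mu_ne (g : G) (x : D.Lam) : X.mu g x ≠ 0 := (X.ex g x).choose_spec.choose_spec.1
lemma mat_vec (g : G) (x : D.Lam) : X.mat g *ᵥ D.vec x = X.mu g x • D.vec (X.act g x) :=
  (X.ex g x).choose_spec.choose_spec.2

lemma uniq {g : G} {x y : D.Lam} {a : F} (ha : a ≠ 0) (h : X.mat g *ᵥ D.vec x = a • D.vec y) :
    X.mu g x = a ∧ X.act g x = y := by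
  rw [X.mat_vec] at h
  exact D.vec_inj (X.mu_ne g x) ha h

lemma mul_both (g k : G) (x : D.Lam) : X.mu (g * k) x = X.mu g (X.act k x) * X.mu k x ∧
    X.act (g * k) x = X.act g (X.act k x) := by
  apply X.uniq
  · exact mul_ne_zero (X.mu_ne _ _) (X.mu_ne _ _)
  · rw [map_mul, ← Matrix.mulVec_mulVec, X.mat_vec, Matrix.mulVec_smul, X.mat_vec, smul_smul,
      mul_comm]

lemma act_mul (g k : G) (x : D.Lam) : X.act (g * k) x = X.act g (X.act k x) := (X.mul_both g k x).2
lemma mu_mul (g k : G) (x : D.Lam) : X.mu (g * k) x = X.mu g (X.act k x) * X.mu k x :=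
  (X.mul_both g k x).1
lemma one_both (x : D.Lam) : X.mu 1 x = 1 ∧ X.act 1 x = x := by
  apply X.uniq one_ne_zero; simp
lemma act_one (x : D.Lam) : X.act 1 x = x := (X.one_both x).2
lemma mu_one (x : D.Lam) : X.mu 1 x = 1 := (X.one_both x).1
lemma act_inv_act (g : G) (x : D.Lam) : X.act g⁻¹ (X.act g x) = x := by
  rw [← X.act_mul, inv_mul_cancel, X.act_one]
lemma act_act_inv (g : G) (x : D.Lam) : X.act g (X.act g⁻¹ x) = x := by
  rw [← X.act_mul, mul_inv_cancel, X.act_one]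
lemma act_inj (g : G) {x y : D.Lam} (h : X.act g x = X.act g y) : x = y := by
  rw [← X.act_inv_act g x, h, X.act_inv_act]
lemma mu_inv (g : G) (x : D.Lam) : X.mu g⁻¹ (X.act g x) = (X.mu g x)⁻¹ := by
  apply eq_inv_of_mul_eq_one_left
  rw [← X.mu_mul, inv_mul_cancel, X.mu_one]

lemma hp_act (g : G) (x y : D.Lam) :
    D.φ (X.mu g x) * X.mu g y * D.hp (X.act g x) (X.act g y) = D.hp x y := by
  rw [← D.hf_vec, ← D.hf_smul, ← X.mat_vec, ← X.mat_vec, X.pres, D.hf_vec]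

/-- base point different from `none` -/
def zp (D : Dat F N) : D.Lam := some (0, 0)

lemma actU (y : F) (z : D.Z) : ∃ g, X.act g none = none ∧ X.act g (zp D) = some (y, z) := by
  obtain ⟨g, hg⟩ := X.hU y z z.2
  refine ⟨g, (X.uniq one_ne_zero ?_).2, (X.uniq one_ne_zero ?_).2⟩
  · rw [hg]; ext i; fin_cases i <;> simp [Dat.vec, Matrix.mulVec, dotProduct, Fin.sum_univ_three]
  · rw [hg]; ext i; fin_cases i <;> simp [Dat.vec, zp, Dat.nm, Matrix.mulVec, dotProduct, Fin.sum_univ_three]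

lemma actW : ∃ g, X.act g none = zp D ∧ X.act g (zp D) = none := by
  obtain ⟨g, hg⟩ := X.hW
  refine ⟨g, (X.uniq one_ne_zero ?_).2, (X.uniq one_ne_zero ?_).2⟩
  · rw [hg]; ext i; fin_cases i <;> simp [Dat.vec, zp, Dat.nm, Matrix.mulVec, dotProduct, Fin.sum_univ_three]
  · rw [hg]; ext i; fin_cases i <;> simp [Dat.vec, zp, Dat.nm, Matrix.mulVec, dotProduct, Fin.sum_univ_three]

lemma actT (a : F) (ha : a ≠ 0) : ∃ g, X.mat g = !![a, 0, 0; 0, D.φ a / a, 0; 0, 0, (D.φ a)⁻¹] ∧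
    (X.mu g none = a ∧ X.act g none = none) ∧
    (X.mu g (zp D) = (D.φ a)⁻¹ ∧ X.act g (zp D) = zp D) := by
  obtain ⟨g, hg⟩ := X.hT a ha
  refine ⟨g, hg, (X.uniq ha ?_), (X.uniq (inv_ne_zero (by simpa using ha)) ?_)⟩
  · rw [hg]; ext i; fin_cases i <;> simp [Dat.vec, zp, Dat.nm, Matrix.mulVec, dotProduct, Fin.sum_univ_three]
  · rw [hg]; ext i; fin_cases i <;> simp [Dat.vec, zp, Dat.nm, Matrix.mulVec, dotProduct, Fin.sum_univ_three]

lemma trans (x : D.Lam) : ∃ g, X.act g none = x := by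
  match x with
  | none => exact ⟨1, X.act_one _⟩
  | some (y, z) =>
    obtain ⟨g, -, hg⟩ := X.actU y z
    obtain ⟨w, hw, -⟩ := X.actW
    exact ⟨g * w, by rw [X.act_mul, hw, hg]⟩

lemma trans2 (x y : D.Lam) (hxy : x ≠ y) : ∃ g, X.act g none = x ∧ X.act g (zp D) = y := by
  obtain ⟨g, hg⟩ := X.trans x
  have h1 : X.act g⁻¹ y ≠ none := by
    intro h
    apply hxy
    rw [← hg, ← h, X.act_act_inv]
  obtain ⟨⟨a, b⟩, hab⟩ := Option.ne_none_iff_exists'.mp h1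
  obtain ⟨k, hk1, hk2⟩ := X.actU a b
  refine ⟨g * k, ?_, ?_⟩
  · rw [X.act_mul, hk1, hg]
  · rw [X.act_mul, hk2, ← hab, X.act_act_inv]

/-! ### the monomial representation -/

variable {M : Type} [Field M]

def rho (ω : MulChar F M) (g : G) : Matrix D.Lam D.Lam M :=
  fun x' x => if x' = X.act g x then ω (X.mu g x) else 0

lemma rho_mul (ω : MulChar F M) (g k : G) : X.rho ω (g * k) = X.rho ω g * X.rho ω k := by
  ext x' x
  rw [Matrix.mul_apply, Finset.sum_eq_single (X.act k x)]
  · simp only [rho, if_true, X.act_mul, X.mu_mul, map_mul, ite_mul, zero_mul]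
  · intro y _ hy; simp [rho, hy]
  · simp

lemma rho_one (ω : MulChar F M) : X.rho ω (1 : G) = 1 := by
  ext x' x
  simp [rho, X.act_one, X.mu_one, Matrix.one_apply]

lemma mul_rho (ω : MulChar F M) {m : Type*} (C : Matrix m D.Lam M) (g : G) (i : m) (x : D.Lam) :
    (C * X.rho ω g) i x = C i (X.act g x) * ω (X.mu g x) := by
  rw [Matrix.mul_apply, Finset.sum_eq_single (X.act g x)]
  · simp [rho]
  · intro y _ hy; simp [rho, hy]
  · simp

lemma rho_mul_apply (ω : MulChar F M) {m : Type*} (C : Matrix D.Lam m M) (g : G) (i : m)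
    (x : D.Lam) : (X.rho ω g * C) (X.act g x) i = ω (X.mu g x) * C x i := by
  rw [Matrix.mul_apply, Finset.sum_eq_single x]
  · simp [rho]
  · intro y _ hy
    have : X.act g x ≠ X.act g y := fun h => hy (X.act_inj g h).symm
    simp [rho, this]
  · simp

lemma ω_ne (ω : MulChar F M) {a : F} (ha : a ≠ 0) : ω a ≠ 0 :=
  ((Ne.isUnit ha).map ω).ne_zero

/-- Schur -/
lemma schur (ω : MulChar F M) (hω : ω (D.g) ^ (2 * D.h + 2) ≠ 1) (C : Matrix D.Lam D.Lam M)
    (hC : ∀ g, C * X.rho ω g = X.rho ω g * C) : C = (C none none) • (1 : Matrix D.Lam D.Lam M) := by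
  have key : ∀ g x y, C (X.act g x) (X.act g y) * ω (X.mu g y) = ω (X.mu g x) * C x y := by
    intro g x y
    rw [← X.mul_rho ω C g, hC, X.rho_mul_apply]
  have h0 : C none (zp D) = 0 := by
    obtain ⟨g, -, ⟨h1, h2⟩, ⟨h3, h4⟩⟩ := X.actT D.g D.g0
    have := key g none (zp D)
    rw [h1, h2, h3, h4] at this
    by_contra hne
    have h5 : ω (D.φ D.g)⁻¹ = ω D.g := by
      apply mul_left_cancel₀ hne; rw [this, mul_comm]
    apply hω
    have h6 : ω (D.φ D.g) * ω (D.φ D.g)⁻¹ = 1 := by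
      rw [← map_mul, mul_inv_cancel₀ (by simpa using D.g0), map_one]
    rw [h5, ← map_mul, D.hφ] at h6
    rw [← h6, ← map_pow]; congr 1; ring
  have hoff : ∀ x y, x ≠ y → C x y = 0 := by
    intro x y hxy
    obtain ⟨g, rfl, rfl⟩ := X.trans2 x y hxy
    have := key g none (zp D)
    rw [h0, mul_zero] at this
    exact (mul_eq_zero.mp this).resolve_right (ω_ne ω (X.mu_ne _ _))
  have hdiag : ∀ x, C x x = C none none := by
    intro x
    obtain ⟨g, rfl⟩ := X.trans x
    have := key g none none
    rw [mul_comm] at this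
    exact mul_left_cancel₀ (ω_ne ω (X.mu_ne _ _)) this
  ext x y
  by_cases h : x = y
  · subst h; simp [hdiag]
  · simp [hoff x y h, h]

variable [Fintype G]

/-- irreducibility -/
lemma irred [CharZero M] (ω : MulChar F M) (hω : ω (D.g) ^ (2 * D.h + 2) ≠ 1)
    (W : Submodule M (D.Lam → M)) (hW : ∀ g, ∀ v ∈ W, X.rho ω g *ᵥ v ∈ W) : W = ⊥ ∨ W = ⊤ := by
  obtain ⟨P, hP1, hP2⟩ : ∃ P : Matrix D.Lam D.Lam M, (∀ v, P *ᵥ v ∈ W) ∧ (∀ v ∈ W, P *ᵥ v = v) := by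
    obtain ⟨f, hf⟩ := LinearMap.exists_leftInverse_of_injective W.subtype (by simp)
    refine ⟨LinearMap.toMatrix' (W.subtype ∘ₗ f), ?_, ?_⟩
    · intro v
      rw [← Matrix.toLin'_apply, Matrix.toLin'_toMatrix']; simp
    · intro v hv
      rw [← Matrix.toLin'_apply, Matrix.toLin'_toMatrix']
      have := LinearMap.congr_fun hf ⟨v, hv⟩
      simp at this
      simp [this]
  set Q : Matrix D.Lam D.Lam M := ∑ g, X.rho ω g * P * X.rho ω g⁻¹ with hQ
  have hcomm : ∀ k, Q * X.rho ω k = X.rho ω k * Q := by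
    intro k
    rw [hQ, Finset.sum_mul, Finset.mul_sum, ← Equiv.sum_comp (Equiv.mulLeft k)]
    apply Finset.sum_congr rfl
    intro g _
    simp only [Equiv.coe_mulLeft, _root_.mul_inv_rev, X.rho_mul, Matrix.mul_assoc]
    rw [← X.rho_mul ω k⁻¹ k, inv_mul_cancel, X.rho_one, Matrix.mul_one]
  have hS := X.schur ω hω Q hcomm
  have hQW : ∀ v, Q *ᵥ v ∈ W := by
    intro v
    rw [hQ, Matrix.sum_mulVec]
    refine Submodule.sum_mem _ (fun g _ => ?_)
    rw [← Matrix.mulVec_mulVec, ← Matrix.mulVec_mulVec]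
    exact hW _ _ (hP1 _)
  have hQid : ∀ v ∈ W, Q *ᵥ v = (Fintype.card G : M) • v := by
    intro v hv
    rw [hQ, Matrix.sum_mulVec]
    have : ∀ g : G, (X.rho ω g * P * X.rho ω g⁻¹) *ᵥ v = v := by
      intro g
      rw [← Matrix.mulVec_mulVec, ← Matrix.mulVec_mulVec, hP2 _ (hW _ _ hv), Matrix.mulVec_mulVec,
        ← X.rho_mul, mul_inv_cancel, X.rho_one, Matrix.one_mulVec]
    simp only [this, Finset.sum_const, Finset.card_univ]
    rw [Nat.cast_smul_eq_nsmul]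
  have hc : (Fintype.card G : M) ≠ 0 := Nat.cast_ne_zero.mpr Fintype.card_ne_zero
  by_cases hbot : W = ⊥
  · exact Or.inl hbot
  · right
    obtain ⟨v, hv, hv0⟩ := Submodule.exists_mem_ne_zero_of_ne_bot hbot
    have h1 := hQid v hv
    rw [hS, Matrix.smul_mulVec, Matrix.one_mulVec] at h1
    have h2 : Q none none = (Fintype.card G : M) := by
      have : (Q none none - (Fintype.card G : M)) • v = 0 := by rw [sub_smul, h1, sub_self]
      exact sub_eq_zero.mp ((smul_eq_zero.mp this).resolve_right hv0)
    rw [eq_top_iff]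
    intro w _
    have h3 := hQW w
    rw [hS, Matrix.smul_mulVec, Matrix.one_mulVec, h2] at h3
    exact (Submodule.smul_mem_iff W hc).mp h3

end Grp
end PartThree

section PartFour

open scoped Classical

namespace Dat

variable {F N : Type} [Field F] [Fintype F] [Field N] (D : Dat F N)

lemma τ_eq_c (x : F) : D.τ (D.θ x) = D.c (D.θ (D.φ x)) := by rw [D.τθ, D.cθ]

lemma τ_K (b r : F) (hr : D.φ r = r) : D.τ (D.K b r) = D.c (D.K b r) := by
  rw [K, map_sum, map_sum, ← Equiv.sum_comp (Equiv.neg D.Z)]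
  apply Finset.sum_congr rfl
  intro z _
  have hz : D.φ z = - z := z.2
  have h2 : D.φ 2 = 2 := map_ofNat _ _
  rw [map_mul D.τ, map_mul D.c, D.τψ, D.cψ, D.τ_eq_c]
  simp only [Equiv.neg_apply, AddSubgroup.coe_neg, map_sub, map_neg, hz, map_div₀, hr, h2]
  congr 2
  · ring
  · ring_nf

lemma τ_lam (b : F) : D.τ (D.lam b) = D.c (D.lam b) := by
  rw [lam, map_sum, map_sum, ← Equiv.sum_comp (Equiv.neg F)]
  apply Finset.sum_congr rfl
  intro y _
  rw [map_mul D.τ, map_mul D.c, D.τψ, D.cψ, D.τ_K _ _ (D.φ_nm _)]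
  simp [D.nm_neg]

lemma τ_Ah (b : F) : (D.Ah b).map D.τ = ((D.Ah b).map D.c)ᵀ := by
  ext y y'
  simp only [Matrix.map_apply, Matrix.transpose_apply, Ah, map_mul]
  rw [D.τψ, D.cψ, D.τ_K _ _ (D.φ_nm _), ← D.nm_neg (y - y')]
  congr 2
  · simp only [br]; ring
  · congr 2; ring

lemma τ_dC (b : F) : D.τ (D.dC b) = D.c (D.dC b) := by
  rw [dC, RingHom.map_det, RingHom.map_det]
  change ((D.Ah b).map D.τ).det = ((D.Ah b).map D.c).det
  rw [τ_Ah, Matrix.det_transpose]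

lemma t_eq : D.t = D.θ (D.e 1) := by rw [D.θ_e, pow_one]
lemma c_t : D.c D.t = D.t⁻¹ := by
  rw [t_eq, D.cθ]
  apply eq_inv_of_mul_eq_one_left
  rw [← map_mul, inv_mul_cancel₀ (D.e_ne 1), map_one]
lemma τ_t : D.τ D.t = D.t⁻¹ := by
  rw [← D.c_t, t_eq, D.τ_eq_c, D.φ_e]

lemma c_ga (β : N) (hβ : β ^ (2 * D.h) = 1) (hc : D.c β = β⁻¹) :
    D.ga β⁻¹ = (β ^ D.h)⁻¹ * D.c (D.ga β) := by
  rw [← D.ga_shift β⁻¹ (by rw [inv_pow, hβ, inv_one]) D.h, inv_pow]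
  congr 1
  rw [ga, map_sum]
  apply Finset.sum_congr rfl
  intro i _
  rw [map_mul D.c, map_pow, hc, D.cψ, D.e_half, neg_one_mul]

lemma τ_ga_t : D.τ (D.ga D.t) = D.ga D.t⁻¹ := by
  rw [ga, map_sum]
  apply Finset.sum_congr rfl
  intro i _
  rw [map_mul, map_pow, D.τ_t, D.τψ]

lemma τ_ga_sq : D.τ (D.ga D.t) ^ 2 = D.c (D.ga D.t) ^ 2 := by
  rw [D.τ_ga_t, D.c_ga D.t D.t_2h D.c_t, mul_pow, inv_pow, ← pow_mul, mul_comm D.h, D.t_2h]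
  simp

/-- the quadratic Gauss sum -/
def gam : N := D.ga (-1)

lemma τ_gam : D.τ D.gam = D.gam := by
  rw [gam, ga, map_sum]
  apply Finset.sum_congr rfl
  intro i _
  simp [D.τψ]

lemma c_gam : D.c D.gam = (-1) ^ D.h * D.gam := by
  have h := D.c_ga (-1) (by rw [pow_mul]; simp) (by rw [map_neg, map_one]; norm_num)
  rw [show (-1 : N)⁻¹ = -1 by norm_num] at h
  rw [gam]
  conv_rhs => rw [h]
  rw [← mul_assoc, mul_inv_cancel₀ (pow_ne_zero _ (by norm_num)), one_mul]

/-- An admissible automorphism. -/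
structure Good (σ : N →+* N) : Prop where
  θ : ∀ x, σ (D.θ x) = D.θ x
  ψ : ∃ i, ∀ x, σ (D.ψ x) = D.ψ (D.e i * x)
  c : ∀ x, σ (D.c x) = D.c (σ x)
  τ : ∀ x, σ (D.τ x) = D.τ (σ x)

section good
variable {D} {σ : N →+* N}

lemma Good.K (hσ : D.Good σ) {i : ℕ} (hi : ∀ x, σ (D.ψ x) = D.ψ (D.e i * x)) (b r : F) :
    σ (D.K b r) = D.K (b * D.e i) r := by
  rw [Dat.K, Dat.K, map_sum]
  apply Finset.sum_congr rfl
  intro z _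
  rw [map_mul, hi, hσ.θ]; congr 2; ring

lemma Good.lam (hσ : D.Good σ) {i : ℕ} (hi : ∀ x, σ (D.ψ x) = D.ψ (D.e i * x)) (b : F) :
    σ (D.lam b) = D.lam (b * D.e i) := by
  rw [Dat.lam, Dat.lam, map_sum]
  apply Finset.sum_congr rfl
  intro z _
  rw [map_mul, hi, hσ.K hi, zero_mul]; congr 2; ring

lemma Good.lam1 (hσ : D.Good σ) {i : ℕ} (hi : ∀ x, σ (D.ψ x) = D.ψ (D.e i * x)) :
    D.lam 1 = D.t ^ (2 * i) * σ (D.lam 1) := by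
  rw [hσ.lam hi, D.lam_g ((2 * D.h + 2) * i), ← e]
  rw [show (2 * D.h + 2) * i = (2 * D.h) * i + 2 * i by ring, pow_add, pow_mul, D.t_2h]
  simp

lemma Good.dC1 (hσ : D.Good σ) {i : ℕ} (hi : ∀ x, σ (D.ψ x) = D.ψ (D.e i * x)) :
    D.dC D.c1 = D.t ^ i * σ (D.dC D.c1) := by
  refine (D.dC_e i D.c1).trans ?_
  congr 1
  unfold Dat.dC
  rw [RingHom.map_det]
  congr 1
  ext y y'
  simp only [Ah, RingHom.mapMatrix_apply, Matrix.map_apply, map_mul]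
  rw [hi, hσ.K hi]; congr 2; ring

lemma Good.t (hσ : D.Good σ) : σ D.t = D.t := by rw [t_eq, hσ.θ]

lemma Good.ga (hσ : D.Good σ) {i : ℕ} (hi : ∀ x, σ (D.ψ x) = D.ψ (D.e i * x)) (β : N)
    (hβ : β ^ (2 * D.h) = 1) (hs : σ β = β) : D.ga β = β ^ i * σ (D.ga β) := by
  refine (D.ga_shift β hβ i).symm.trans ?_
  congr 1
  unfold Dat.ga
  rw [map_sum]
  apply Finset.sum_congr rfl
  intro j _
  rw [map_mul σ, map_pow, hs, hi]

end good

/-- elements fixed by all relevant automorphisms except `τ` -/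
def SF (S : Set (N →+* N)) (x : N) : Prop := ∀ σ ∈ S, σ x = x

/-- the auxiliary element of norm `q` -/
def E : N := D.lam 1 / D.ga D.t ^ 2

lemma E_good {σ : N →+* N} (hσ : D.Good σ) : σ D.E = D.E := by
  obtain ⟨i, hi⟩ := hσ.ψ
  have h1 := hσ.lam1 hi
  have h2 := hσ.ga hi D.t D.t_2h hσ.t
  have ht : D.t ^ i ≠ 0 := pow_ne_zero _ D.t_ne
  rw [E, map_div₀, map_pow]
  conv_rhs => rw [h1, h2]
  rw [mul_pow, ← pow_mul, mul_comm i 2, mul_div_mul_left _ _ (pow_ne_zero _ D.t_ne)]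

/-- the square root of the determinant -/
def W : N := D.lam 1 ^ (2 * D.h * (D.h + 1)) * D.dC D.c1 ^ D.h * D.gam ^ D.u

lemma W_good {σ : N →+* N} (hσ : D.Good σ) : σ D.W = D.W := by
  obtain ⟨i, hi⟩ := hσ.ψ
  have h1 := hσ.lam1 hi
  have h2 := hσ.dC1 hi
  have h3 : D.gam = _ := hσ.ga hi (-1) (by rw [pow_mul]; simp) (by simp)
  change D.gam = (-1) ^ i * σ D.gam at h3
  rw [W, map_mul, map_mul, map_pow, map_pow, map_pow]
  conv_rhs => rw [h1, h2, h3]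
  rw [mul_pow, mul_pow, mul_pow]
  have e1 : (D.t ^ (2 * i)) ^ (2 * D.h * (D.h + 1)) = 1 := by
    rw [← pow_mul, show 2 * i * (2 * D.h * (D.h + 1)) = 2 * D.h * (2 * i * (D.h + 1)) by ring,
      pow_mul, D.t_2h, one_pow]
  have e2 : (D.t ^ i) ^ D.h = ((-1) ^ i) ^ D.u := by
    rw [← pow_mul, mul_comm, pow_mul, D.t_h, ← pow_mul, ← pow_mul, mul_comm]
  have e3 : (((-1 : N) ^ i) ^ D.u) * ((-1) ^ i) ^ D.u = 1 := by
    rw [← mul_pow, ← mul_pow]; simp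
  rw [e1, e2]
  linear_combination (-(σ (D.lam 1) ^ (2 * D.h * (D.h + 1)) * σ (D.dC D.c1) ^ D.h * σ D.gam ^ D.u)) * e3

lemma τ_W : D.τ D.W = ((-1) ^ D.h) ^ D.u * D.c D.W := by
  simp only [W, map_mul, map_pow, D.τ_lam, D.τ_dC, D.τ_gam, D.c_gam, mul_pow]
  have e3 : (((-1 : N) ^ D.h) ^ D.u) * ((-1) ^ D.h) ^ D.u = 1 := by
    rw [← mul_pow, ← mul_pow]; simp
  linear_combination (-(D.c (D.lam 1) ^ (2 * D.h * (D.h + 1)) * D.c (D.dC D.c1) ^ D.h * D.gam ^ D.u)) * e3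

variable [CharZero N]

lemma gam_norm : D.gam * D.c D.gam = 2 * D.h + 1 :=
  D.ga_norm (-1) (by rw [pow_mul]; simp) (by norm_num) (by rw [map_neg, map_one]; norm_num)

lemma gam_sq : D.gam ^ 2 = (-1) ^ D.h * (2 * D.h + 1) := by
  rw [← D.gam_norm, D.c_gam]
  have e3 : ((-1 : N) ^ D.h) * (-1) ^ D.h = 1 := by
    rw [← mul_pow]; simp
  linear_combination (- D.gam ^ 2) * e3

lemma ga_t_norm : D.ga D.t * D.c (D.ga D.t) = 2 * D.h + 1 :=
  D.ga_norm D.t D.t_2h D.ht D.c_t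

lemma det_A_W : (2 * D.h + 1) ^ D.u * D.A.det =
    - (-1) ^ D.u * ((-1) ^ D.h) ^ D.u * (2 * D.h + 1) ^ 3 * D.W ^ 2 := by
  have e3 : (((-1 : N) ^ D.h) ^ D.u) * ((-1) ^ D.h) ^ D.u = 1 := by
    rw [← mul_pow, ← mul_pow]; simp
  have h1 : (D.gam ^ D.u) ^ 2 = ((-1) ^ D.h) ^ D.u * (2 * D.h + 1) ^ D.u := by
    rw [← pow_mul, mul_comm, pow_mul, gam_sq, mul_pow]
  have h2 : D.W ^ 2 = D.lam 1 ^ (4 * D.h * (D.h + 1)) * D.dC D.c1 ^ (2 * D.h) *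
      (((-1) ^ D.h) ^ D.u * (2 * D.h + 1) ^ D.u) := by
    rw [← h1, W]; ring
  rw [h2, D.det_A]
  linear_combination ((2 * D.h + 1 : N) ^ D.u * (2 * D.h + 1) ^ 3 * D.lam 1 ^ (4 * D.h * (D.h + 1)) *
    ((-1) ^ D.u * D.dC D.c1 ^ (2 * D.h))) * e3

lemma A_τ : D.A.map D.τ = (D.A.map D.c)ᵀ := by
  ext x y
  simp only [Matrix.map_apply, Matrix.transpose_apply, A]
  rw [D.τ_eq_c, D.φ_hp]

lemma A_none : ((D.A.map D.τ) * D.A) none none = (2 * D.h + 1) ^ 3 := by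
  rw [Matrix.mul_apply, Fintype.sum_option]
  simp only [Matrix.map_apply, A, hp, map_one, mul_one, Finset.sum_const, Finset.card_univ,
    Fintype.card_prod, D.card, D.card_Z, MulChar.map_zero, mul_zero, zero_add]
  simp
  ring

end Dat

namespace Grp
variable {F N : Type} [Field F] [Fintype F] [Field N] {D : Dat F N} {G : Type} [Group G]
  (X : Grp D G)

lemma A_rho (g : G) : D.A * X.rho D.θ g = (X.rho D.θ g).map D.τ * D.A := by
  ext x y
  obtain ⟨x, rfl⟩ : ∃ x', x = X.act g x' := ⟨X.act g⁻¹ x, (X.act_act_inv g x).symm⟩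
  rw [X.mul_rho, Matrix.mul_apply, Finset.sum_eq_single x]
  · simp only [Matrix.map_apply, rho, if_true, Dat.A]
    rw [D.τθ, ← map_mul, ← map_mul, ← X.hp_act g x y]
    congr 1
    have : D.φ (X.mu g x) ≠ 0 := by simpa using X.mu_ne g x
    field_simp
  · intro z _ hz
    have : X.act g x ≠ X.act g z := fun h => hz (X.act_inj g h).symm
    simp [rho, this]
  · simp

variable [CharZero N]

lemma τA_A (X : Grp D G) : D.A.map D.τ * D.A = ((2 * D.h + 1 : N) ^ 3) • (1 : Matrix D.Lam D.Lam N) := by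
  rw [← D.A_none]
  apply X.schur D.θ D.ht
  intro g
  rw [Matrix.mul_assoc, X.A_rho, ← Matrix.mul_assoc, ← Matrix.mul_assoc]
  congr 1
  rw [← Matrix.map_mul, X.A_rho, Matrix.map_mul, Matrix.map_map]
  congr 1
  ext x y
  simp [D.ττ]

lemma A_τA (X : Grp D G) : D.A * D.A.map D.τ = ((2 * D.h + 1 : N) ^ 3) • (1 : Matrix D.Lam D.Lam N) := by
  have hq := D.q_ne
  have h := X.τA_A
  have h1 : ((((2 * D.h + 1 : N) ^ 3)⁻¹) • D.A.map D.τ) * D.A = 1 := by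
    rw [Matrix.smul_mul, h, smul_smul, inv_mul_cancel₀ (pow_ne_zero _ hq), one_smul]
  have h2 := mul_eq_one_comm.mp h1
  rw [Matrix.mul_smul] at h2
  rw [← h2, smul_smul, mul_inv_cancel₀ (pow_ne_zero _ hq), one_smul]

lemma lam_norm (X : Grp D G) : D.lam 1 * D.c (D.lam 1) = (2 * D.h + 1) ^ 3 := by
  set v : D.Lam → N := fun x => D.F1 x (Sum.inl (some 1)) with hv
  have hAv : D.A *ᵥ v = D.lam 1 • v := by
    ext x
    have h1 := congrFun (congrFun D.A_F1 x) (Sum.inl (some 1))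
    have h2 : (D.F1 * D.At) x (Sum.inl (some 1)) = D.lam 1 * v x := by
      rw [Matrix.mul_apply, Finset.sum_eq_single (Sum.inl (some 1))]
      · rw [Dat.At, Matrix.fromBlocks_apply₁₁, Matrix.submatrix_apply,
          Equiv.swap_apply_of_ne_of_ne (by simp) (by simp)]
        simp [Dat.dd, hv, mul_comm]
      · rintro (b | b) _ hb
        · rw [Dat.At, Matrix.fromBlocks_apply₁₁, Matrix.submatrix_apply, Matrix.diagonal_apply_ne]
          · simp
          · intro hcon
            apply hb
            have h3 : Equiv.swap none (some 0) (some 1 : Option F) = some 1 :=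
              Equiv.swap_apply_of_ne_of_ne (by simp) (by simp)
            rw [id, ← h3] at hcon
            rw [(Equiv.swap none (some 0)).injective hcon]
        · simp [Dat.At]
      · simp
    rw [h2] at h1
    exact h1
  have hτ : (D.A.map D.τ) *ᵥ v = D.τ (D.lam 1) • v := by
    have hvτ : ∀ x, D.τ (v x) = v x := by
      intro x
      match x with
      | none => simp [hv, Dat.F1]
      | some (y, z) => simp [hv, Dat.F1, D.τψ]
    ext x
    have := congrArg D.τ (congrFun hAv x)
    simp only [Matrix.mulVec, dotProduct, map_sum, map_mul, Pi.smul_apply, smul_eq_mul, hvτ] at this ⊢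
    simpa using this
  have h1 : (D.A.map D.τ * D.A) *ᵥ v = (D.lam 1 * D.τ (D.lam 1)) • v := by
    rw [← Matrix.mulVec_mulVec, hAv, Matrix.mulVec_smul, hτ, smul_smul]
  rw [X.τA_A, D.τ_lam] at h1
  have h2 := congrFun h1 (some (0, 0))
  simp [hv, Dat.F1, Matrix.smul_mulVec] at h2
  exact h2.symm

lemma E_norm (X : Grp D G) : D.E * D.c D.E = 2 * D.h + 1 := by
  have hq := D.q_ne
  have h1 := X.lam_norm
  have h2 := D.ga_t_norm
  have h3 : D.ga D.t ≠ 0 := by intro h; rw [h, zero_mul] at h2; exact hq h2.symm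
  have h4 : D.c (D.ga D.t) ≠ 0 := by simpa using h3
  rw [Dat.E, map_div₀, map_pow]
  field_simp
  rw [h1, ← mul_pow, h2]; ring

lemma E_τ : D.τ D.E = D.c D.E := by
  rw [Dat.E, map_div₀, map_div₀, map_pow, map_pow, D.τ_ga_sq, D.τ_lam]

lemma det_norm (X : Grp D G) : D.A.det * D.τ (D.A.det) = (2 * D.h + 1) ^ (3 * ((2 * D.h + 1) ^ 3 + 1)) := by
  have := congrArg Matrix.det X.τA_A
  rw [Matrix.det_mul, Matrix.det_smul, Matrix.det_one, mul_one, D.card_Lam] at this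
  rw [pow_mul, ← this, RingHom.map_det]
  rw [mul_comm]; rfl

lemma pos_eq (ι : N →+* ℂ) (hι : ∀ x, ι (D.c x) = (starRingEnd ℂ) (ι x)) (w : N) (a b : ℕ)
    (hw : (w * D.c w) ^ 2 * (2 * D.h + 1) ^ (2 * a) = (2 * D.h + 1) ^ (2 * b)) :
    w * D.c w * (2 * D.h + 1) ^ a = (2 * D.h + 1) ^ b := by
  apply ι.injective
  have h1 := congrArg ι hw
  simp only [map_mul, map_pow, map_add, map_ofNat, map_natCast, map_one, hι, Complex.mul_conj] at h1 ⊢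
  have h2 : (Complex.normSq (ι w)) ^ 2 * (2 * (D.h : ℝ) + 1) ^ (2 * a) = (2 * (D.h : ℝ) + 1) ^ (2 * b) := by
    exact_mod_cast h1
  have h3 : (Complex.normSq (ι w)) * (2 * (D.h : ℝ) + 1) ^ a = (2 * (D.h : ℝ) + 1) ^ b := by
    rw [← pow_left_inj₀ (n := 2) (mul_nonneg (Complex.normSq_nonneg _) (by positivity)) (by positivity) (by norm_num)]
    rw [mul_pow, ← pow_mul, ← pow_mul, mul_comm a, mul_comm b]; exact h2
  exact_mod_cast h3

lemma W_norm (X : Grp D G) (ι : N →+* ℂ) (hι : ∀ x, ι (D.c x) = (starRingEnd ℂ) (ι x)) (m : ℕ)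
    (hm : (2 * D.h + 1) ^ 3 + 1 = 2 * m) :
    D.W * D.c D.W * (2 * D.h + 1) ^ 3 = (2 * D.h + 1) ^ (3 * m + D.u) := by
  apply pos_eq ι hι
  have h1 := X.det_norm
  rw [hm] at h1
  have h2 := D.det_A_W
  have h3 := congrArg D.τ h2
  simp only [map_mul, map_pow, map_add, map_ofNat, map_natCast, map_one, map_neg, D.τ_W] at h3
  have e1 : ((-1 : N) ^ D.u) * (-1) ^ D.u = 1 := by rw [← mul_pow]; simp
  have e3 : (((-1 : N) ^ D.h) ^ D.u) * ((-1) ^ D.h) ^ D.u = 1 := by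
    rw [← mul_pow, ← mul_pow]; simp
  set q : N := 2 * D.h + 1
  set a : N := (-1) ^ D.u
  set b : N := ((-1) ^ D.h) ^ D.u
  have h4 : q ^ D.u * D.A.det * (q ^ D.u * D.τ D.A.det) = q ^ 6 * (D.W * D.c D.W) ^ 2 := by
    rw [h2, h3]
    have : b ^ 4 = 1 := by linear_combination (b * b + 1) * e3
    linear_combination (q ^ 6 * D.W ^ 2 * D.c D.W ^ 2 * b ^ 4) * e1 + (q ^ 6 * D.W ^ 2 * D.c D.W ^ 2) * this
  calc (D.W * D.c D.W) ^ 2 * q ^ (2 * 3) = q ^ D.u * D.A.det * (q ^ D.u * D.τ D.A.det) := by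
        rw [h4]; ring
    _ = q ^ (2 * D.u) * (D.A.det * D.τ D.A.det) := by ring
    _ = _ := by rw [h1]; ring

lemma det_A_τW (X : Grp D G) (ι : N →+* ℂ) (hι : ∀ x, ι (D.c x) = (starRingEnd ℂ) (ι x)) (m : ℕ)
    (hm : (2 * D.h + 1) ^ 3 + 1 = 2 * m) :
    D.A.det * D.τ D.W = - (-1) ^ D.u * (2 * D.h + 1) ^ (3 * m) * D.W := by
  have hq := D.q_ne
  have h1 := X.W_norm ι hι m hm
  have h2 := D.det_A_W
  have e3 : (((-1 : N) ^ D.h) ^ D.u) * ((-1) ^ D.h) ^ D.u = 1 := by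
    rw [← mul_pow, ← mul_pow]; simp
  apply mul_left_cancel₀ (pow_ne_zero D.u hq)
  rw [D.τ_W, ← mul_assoc, h2]
  rw [pow_add] at h1
  linear_combination (- (-1) ^ D.u * ((2 * D.h + 1 : N)) ^ 3 * D.W ^ 2 * D.c D.W) * e3 - (-1) ^ D.u * D.W * h1

end Grp
end PartFour

section PartFive

open scoped Classical

namespace Grp
variable {F N : Type} [Field F] [Fintype F] [Field N] {D : Dat F N} {G : Type} [Group G]
  (X : Grp D G)

/-- conjugate transpose with respect to `c` -/
def st (D : Dat F N) {a b : Type*} (M : Matrix a b N) : Matrix b a N := (M.map D.c)ᵀ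

lemma st_mul {a b d : Type*} [Fintype b] (M : Matrix a b N) (M' : Matrix b d N) :
    st D (M * M') = st D M' * st D M := by
  rw [st, Matrix.map_mul, Matrix.transpose_mul]; rfl

lemma st_smul {a b : Type*} (r : N) (M : Matrix a b N) : st D (r • M) = D.c r • st D M := by
  ext; simp [st]

lemma st_st {a b : Type*} (M : Matrix a b N) : st D (st D M) = M := by
  ext; simp [st, D.cc]

lemma st_one {a : Type*} [DecidableEq a] : st D (1 : Matrix a a N) = 1 := by
  ext i j; simp [st, Matrix.one_apply, eq_comm]

lemma det_st {a : Type*} [Fintype a] [DecidableEq a] (M : Matrix a a N) :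
    (st D M).det = D.c M.det := by
  rw [st, Matrix.det_transpose, RingHom.map_det]; rfl

lemma st_rho (g : G) : st D (X.rho D.θ g) = X.rho D.θ g⁻¹ := by
  ext x x'
  simp only [st, Matrix.transpose_apply, Matrix.map_apply, rho]
  by_cases h : x' = X.act g x
  · subst h
    simp [X.act_inv_act, X.mu_inv, D.cθ]
  · have h' : x ≠ X.act g⁻¹ x' := by
      rintro rfl
      exact h (X.act_act_inv g x').symm
    simp [h, h']

lemma rho_inv_mul {M : Type} [Field M] (ω : MulChar F M) (g : G) : X.rho ω g⁻¹ * X.rho ω g = 1 := by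
  rw [← X.rho_mul, inv_mul_cancel, X.rho_one]

lemma rho_map {σ : N →+* N} (hσ : D.Good σ) (g : G) : (X.rho D.θ g).map σ = X.rho D.θ g := by
  ext x y
  simp only [Matrix.map_apply, rho]
  split_ifs
  · exact hσ.θ _
  · simp

lemma A_map {σ : N →+* N} (hσ : D.Good σ) : D.A.map σ = D.A := by
  ext x y
  simp only [Matrix.map_apply, Dat.A, hσ.θ]

variable [Fintype G] [CharZero N]

lemma exists_P (ι : N →+* ℂ) (hι : ∀ x, ι (D.c x) = (starRingEnd ℂ) (ι x))
    (S : Set (N →+* N)) (hS : ∀ σ ∈ S, D.Good σ)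
    (R : G → Matrix D.Lam D.Lam N) (hRm : ∀ g k, R (g * k) = R g * R k)
    (htr : ∀ g, (R g).trace = (X.rho D.θ g).trace)
    (hRS : ∀ g, ∀ σ ∈ S, (R g).map σ = R g) :
    ∃ P : Matrix D.Lam D.Lam N, (∀ σ ∈ S, P.map σ = P) ∧ P.det ≠ 0 ∧
      ∀ g, R g * P = P * X.rho D.θ g := by
  set Q : D.Lam → D.Lam → Matrix D.Lam D.Lam N := fun i j =>
    ∑ g, R g * Matrix.single i j 1 * X.rho D.θ g⁻¹ with hQ
  have hQcomm : ∀ i j g, R g * Q i j = Q i j * X.rho D.θ g := by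
    intro i j k
    simp only [hQ]
    rw [Finset.mul_sum, Finset.sum_mul]
    symm
    rw [← Equiv.sum_comp (Equiv.mulLeft k)]
    apply Finset.sum_congr rfl
    intro g _
    simp only [Equiv.coe_mulLeft, _root_.mul_inv_rev, X.rho_mul, hRm, Matrix.mul_assoc]
    rw [X.rho_inv_mul, Matrix.mul_one]
  have hQS : ∀ i j, ∀ σ ∈ S, (Q i j).map σ = Q i j := by
    intro i j σ hσ
    simp only [hQ]
    change σ.mapMatrix _ = _
    rw [map_sum]
    apply Finset.sum_congr rfl
    intro g _
    rw [map_mul, map_mul]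
    simp only [RingHom.mapMatrix_apply]
    rw [hRS g σ hσ, X.rho_map (hS σ hσ)]
    congr 2
    ext a b; simp [Matrix.single]
  obtain ⟨i, j, hij⟩ : ∃ i j, Q i j ≠ 0 := by
    by_contra! hcon
    have h1 : ∑ g, (R g).trace * (X.rho D.θ g⁻¹).trace = 0 := by
      have h2 : ∀ g : G, (R g).trace * (X.rho D.θ g⁻¹).trace =
          ∑ i, ∑ j, (R g * Matrix.single i j (1 : N) * X.rho D.θ g⁻¹ : Matrix D.Lam D.Lam N) i j := by
        intro g
        rw [Matrix.trace, Matrix.trace, Finset.sum_mul]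
        apply Finset.sum_congr rfl
        intro i _
        rw [Finset.mul_sum]
        apply Finset.sum_congr rfl
        intro j _
        rw [Matrix.mul_apply, Finset.sum_eq_single j]
        · simp [Matrix.mul_apply, Matrix.single, Finset.sum_ite_eq, ite_and]
        · intro k _ hk
          rw [Matrix.mul_single_apply_of_ne _ _ _ _ _ hk, zero_mul]
        · simp
      simp only [h2]
      rw [Finset.sum_comm]
      apply Finset.sum_eq_zero
      intro i _
      rw [Finset.sum_comm]
      apply Finset.sum_eq_zero
      intro j _
      have := congrFun (congrFun (hcon i j) i) j
      simpa [hQ, Matrix.sum_apply] using this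
    have h3 : ∀ g : G, ι ((R g).trace * (X.rho D.θ g⁻¹).trace) =
        (Complex.normSq (ι (X.rho D.θ g).trace) : ℂ) := by
      intro g
      rw [htr, ← X.st_rho, ← Complex.mul_conj, ← hι, map_mul]
      congr 2
      rw [st, Matrix.trace_transpose, Matrix.trace, Matrix.trace, map_sum]; rfl
    have h4 := congrArg ι h1
    rw [map_sum, map_zero] at h4
    simp only [h3] at h4
    have h5 : ∑ g : G, Complex.normSq (ι (X.rho D.θ g).trace) = 0 := by exact_mod_cast h4
    rw [Finset.sum_eq_zero_iff_of_nonneg (fun g _ => Complex.normSq_nonneg _)] at h5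
    have h6 := h5 1 (Finset.mem_univ _)
    rw [X.rho_one, Matrix.trace_one, Complex.normSq_eq_zero, map_natCast, Nat.cast_eq_zero,
      D.card_Lam] at h6
    omega
  refine ⟨Q i j, hQS i j, ?_, hQcomm i j⟩
  intro hdet
  obtain ⟨v, hv0, hv⟩ := Matrix.exists_mulVec_eq_zero_iff.mpr hdet
  rcases X.irred D.θ D.ht (LinearMap.ker (Matrix.toLin' (Q i j))) (by
    intro g v hv
    simp only [LinearMap.mem_ker, Matrix.toLin'_apply] at hv ⊢
    rw [Matrix.mulVec_mulVec, ← hQcomm, ← Matrix.mulVec_mulVec, hv, Matrix.mulVec_zero]) with h | h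
  · apply hv0
    have : v ∈ LinearMap.ker (Matrix.toLin' (Q i j)) := by simpa using hv
    rw [h] at this
    simpa using this
  · rw [LinearMap.ker_eq_top] at h
    apply hij
    simpa using h

theorem main (ι : N →+* ℂ) (hι : ∀ x, ι (D.c x) = (starRingEnd ℂ) (ι x))
    (S : Set (N →+* N)) (hS : ∀ σ ∈ S, D.Good σ)
    (R : G → Matrix D.Lam D.Lam N) (hRm : ∀ g k, R (g * k) = R g * R k)
    (htr : ∀ g, (R g).trace = (X.rho D.θ g).trace)
    (hRS : ∀ g, ∀ σ ∈ S, (R g).map σ = R g) (hRτ : ∀ g, (R g).map D.τ = R g)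
    (H : Matrix D.Lam D.Lam N) (hHS : ∀ σ ∈ S, H.map σ = H) (hHτ : H.map D.τ = H)
    (hHdet : H.det ≠ 0) (hHc : st D H = H) (hinv : ∀ g, st D (R g) * H * R g = H)
    (z0 : N) (hz0 : z0 ≠ 0) (hz0τ : D.τ z0 = - z0) (hz0c : D.c z0 = - z0)
    (hz0S : ∀ σ ∈ S, σ z0 = z0) (m : ℕ) (hm : (2 * D.h + 1) ^ 3 + 1 = 2 * m) :
    ∃ y : N, y ≠ 0 ∧ D.τ y = y ∧ (∀ σ ∈ S, σ y = y) ∧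
      H.det = (2 * D.h + 1) ^ (D.u + 1) * (z0 * D.c z0) * (y * D.c y) := by
  have hq := D.q_ne
  obtain ⟨P0, hP0S, hP0d, hP0⟩ := X.exists_P ι hι S hS R hRm htr hRS
  have hE := X.E_norm
  have hE0 : D.E ≠ 0 := by intro h; rw [h, zero_mul] at hE; exact hq hE.symm
  have hEτ : D.τ D.E = D.c D.E := E_τ
  have hES : ∀ σ ∈ S, σ D.E = D.E := fun σ hσ => D.E_good (hS σ hσ)
  -- the scalar κ
  obtain ⟨κ, hκ⟩ : ∃ κ : N, P0.map D.τ * D.A = κ • P0 := by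
    have hu : IsUnit P0.det := hP0d.isUnit
    have h1 : ∀ g, (P0⁻¹ * (P0.map D.τ * D.A)) * X.rho D.θ g =
        X.rho D.θ g * (P0⁻¹ * (P0.map D.τ * D.A)) := by
      intro g
      have e1 : R g * P0.map D.τ = P0.map D.τ * (X.rho D.θ g).map D.τ := by
        rw [← Matrix.map_mul, ← hP0, Matrix.map_mul, hRτ]
      have e2 : P0⁻¹ * R g = X.rho D.θ g * P0⁻¹ := by
        have : P0⁻¹ * (R g * P0) * P0⁻¹ = P0⁻¹ * (P0 * X.rho D.θ g) * P0⁻¹ := by rw [hP0]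
        rw [← Matrix.mul_assoc P0⁻¹ P0, Matrix.nonsing_inv_mul _ hu, Matrix.one_mul] at this
        rw [← this]
        simp only [Matrix.mul_assoc]
        rw [Matrix.mul_nonsing_inv _ hu, Matrix.mul_one]
      simp only [Matrix.mul_assoc]
      rw [X.A_rho, ← Matrix.mul_assoc (P0.map D.τ), ← e1, Matrix.mul_assoc (R g),
        ← Matrix.mul_assoc P0⁻¹, e2, Matrix.mul_assoc]
    have h2 := X.schur D.θ D.ht _ h1
    refine ⟨(P0⁻¹ * (P0.map D.τ * D.A)) none none, ?_⟩
    have h3 := congrArg (fun M => P0 * M) h2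
    rw [← Matrix.mul_assoc, Matrix.mul_nonsing_inv _ hu, Matrix.one_mul, Matrix.mul_smul,
      Matrix.mul_one] at h3
    exact h3
  have hP0ne : P0 ≠ 0 := by
    rintro rfl
    apply hP0d
    haveI : Nonempty D.Lam := ⟨none⟩
    exact Matrix.det_zero
  have hκS : ∀ σ ∈ S, σ κ = κ := by
    intro σ hσ
    have h1 := congrArg (fun M : Matrix D.Lam D.Lam N => M.map σ) hκ
    have h2 : (P0.map D.τ).map σ = P0.map D.τ := by
      ext x y
      have := congrFun (congrFun (hP0S σ hσ) x) y
      simp only [Matrix.map_apply] at this ⊢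
      rw [(hS σ hσ).τ, this]
    have h3 : (κ • P0).map σ = σ κ • P0 := by
      ext x y
      have := congrFun (congrFun (hP0S σ hσ) x) y
      simp only [Matrix.map_apply] at this
      simp [this]
    rw [Matrix.map_mul, h2, A_map (hS σ hσ), hκ, h3] at h1
    have h4 : (κ - σ κ) • P0 = 0 := by rw [sub_smul, h1, sub_self]
    exact (sub_eq_zero.mp ((smul_eq_zero.mp h4).resolve_right hP0ne)).symm
  have hκτ : κ * D.τ κ = (2 * D.h + 1) ^ 3 := by
    have h1 := congrArg (fun M : Matrix D.Lam D.Lam N => M.map D.τ) hκ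
    have h2 : (P0.map D.τ).map D.τ = P0 := by ext x y; simp [D.ττ]
    have h3 : (κ • P0).map D.τ = D.τ κ • P0.map D.τ := by ext x y; simp
    rw [Matrix.map_mul, h2, h3] at h1
    have h4 := congrArg (fun M : Matrix D.Lam D.Lam N => M * D.A) h1
    rw [Matrix.mul_assoc, X.τA_A, Matrix.smul_mul, hκ, smul_smul, Matrix.mul_smul,
      Matrix.mul_one] at h4
    have h5 : ((2 * D.h + 1 : N) ^ 3 - D.τ κ * κ) • P0 = 0 := by rw [sub_smul, h4, sub_self]
    rw [mul_comm, ← sub_eq_zero.mp ((smul_eq_zero.mp h5).resolve_right hP0ne)]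
  -- Hilbert 90
  obtain ⟨w, hw0, hwS, hwτ⟩ : ∃ w : N, w ≠ 0 ∧ (∀ σ ∈ S, σ w = w) ∧ D.τ w * κ = D.E ^ 3 * w := by
    by_cases hk : κ = - D.E ^ 3
    · refine ⟨z0, hz0, hz0S, ?_⟩
      rw [hz0τ, hk]; ring
    · refine ⟨1 + κ / D.E ^ 3, ?_, ?_, ?_⟩
      · intro h
        apply hk
        field_simp at h
        linear_combination h
      · intro σ hσ
        rw [map_add, map_one, map_div₀, map_pow, hκS σ hσ, hES σ hσ]
      · rw [map_add, map_one, map_div₀, map_pow, hEτ]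
        have hcE : D.c D.E ≠ 0 := by simpa using hE0
        have h6 : D.E ^ 3 * D.c D.E ^ 3 = κ * D.τ κ := by rw [← mul_pow, hE, hκτ]
        field_simp
        linear_combination -h6
  obtain ⟨P, hP⟩ : ∃ P : Matrix D.Lam D.Lam N, P = w • P0 := ⟨_, rfl⟩
  have hPd : P.det ≠ 0 := by
    rw [hP, Matrix.det_smul]; exact mul_ne_zero (pow_ne_zero _ hw0) hP0d
  have hPR : ∀ g, R g * P = P * X.rho D.θ g := by
    intro g; rw [hP, Matrix.mul_smul, Matrix.smul_mul, hP0]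
  have hPS : ∀ σ ∈ S, P.map σ = P := by
    intro σ hσ
    ext x y
    have := congrFun (congrFun (hP0S σ hσ) x) y
    simp only [Matrix.map_apply] at this
    simp [hP, this, hwS σ hσ]
  have hPτ : P.map D.τ * D.A = D.E ^ 3 • P := by
    have : P.map D.τ = D.τ w • P0.map D.τ := by ext x y; simp [hP]
    rw [this, Matrix.smul_mul, hκ, smul_smul, hwτ, hP, smul_smul]
  obtain ⟨π, hπ⟩ : ∃ π : N, π = P.det := ⟨_, rfl⟩
  rw [← hπ] at hPd
  have hπS : ∀ σ ∈ S, σ π = π := by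
    intro σ hσ
    rw [hπ, RingHom.map_det, RingHom.mapMatrix_apply, hPS σ hσ]
  have hπτ : D.τ π * D.A.det = (D.E ^ 3) ^ (2 * m) * π := by
    rw [hπ, RingHom.map_det, RingHom.mapMatrix_apply, ← Matrix.det_mul, hPτ, Matrix.det_smul,
      D.card_Lam, hm]
  -- the form
  obtain ⟨c', hc'⟩ : ∃ c' : N, st D P * H * P = c' • (1 : Matrix D.Lam D.Lam N) := by
    refine ⟨_, X.schur D.θ D.ht _ ?_⟩
    intro g
    have h1 : X.rho D.θ g⁻¹ * (st D P * H * P) * X.rho D.θ g = st D P * H * P := by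
      rw [← X.st_rho, Matrix.mul_assoc, Matrix.mul_assoc (st D P * H), ← hPR,
        ← Matrix.mul_assoc, ← Matrix.mul_assoc, ← Matrix.mul_assoc, ← st_mul, ← hPR, st_mul,
        Matrix.mul_assoc (st D P), Matrix.mul_assoc (st D P), hinv]
    have h2 := congrArg (fun M => X.rho D.θ g * M) h1
    rw [← h2, ← Matrix.mul_assoc, ← Matrix.mul_assoc, ← X.rho_mul, mul_inv_cancel, X.rho_one,
      Matrix.one_mul]
  have hdet : D.c π * H.det * π = c' ^ (2 * m) := by
    have := congrArg Matrix.det hc'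
    rw [Matrix.det_mul, Matrix.det_mul, det_st, Matrix.det_smul, Matrix.det_one, mul_one,
      D.card_Lam, hm, ← hπ] at this
    exact this
  have one_inj : ∀ a b : N, a • (1 : Matrix D.Lam D.Lam N) = b • 1 → a = b := by
    intro a b h
    have := congrFun (congrFun h none) none
    simpa using this
  have hm0 : m ≠ 0 := by rintro rfl; omega
  have hc'0 : c' ≠ 0 := by
    rintro rfl
    rw [zero_pow (by omega)] at hdet
    have : D.c π ≠ 0 := by simpa using hPd
    exact mul_ne_zero (mul_ne_zero this hHdet) hPd hdet
  have hc'c : D.c c' = c' := by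
    apply one_inj
    have h1 := congrArg (st D) hc'
    rw [st_mul, st_mul, st_st, hHc, st_smul, st_one, ← Matrix.mul_assoc, hc'] at h1
    exact h1.symm
  have hc'S : ∀ σ ∈ S, σ c' = c' := by
    intro σ hσ
    apply one_inj
    have h1 := congrArg σ.mapMatrix hc'
    rw [map_mul, map_mul] at h1
    simp only [RingHom.mapMatrix_apply] at h1
    have h2 : (st D P).map σ = st D P := by
      ext x y
      have := congrFun (congrFun (hPS σ hσ) y) x
      simp only [Matrix.map_apply] at this
      simp only [st, Matrix.map_apply, Matrix.transpose_apply]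
      rw [(hS σ hσ).c, this]
    rw [h2, hHS σ hσ, hPS σ hσ, hc'] at h1
    rw [h1]
    ext x y
    simp only [Matrix.map_apply, Matrix.smul_apply, Matrix.one_apply, smul_eq_mul, map_mul]
    split_ifs <;> simp
  have hc'τ : D.τ c' = c' := by
    have h1 := congrArg D.τ.mapMatrix hc'
    rw [map_mul, map_mul] at h1
    simp only [RingHom.mapMatrix_apply] at h1
    have h2 : (st D P).map D.τ = st D (P.map D.τ) := by
      ext x y
      simp only [st, Matrix.map_apply, Matrix.transpose_apply, D.cτ]
    have h3 : (c' • (1 : Matrix D.Lam D.Lam N)).map D.τ = D.τ c' • 1 := by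
      ext x y
      simp only [Matrix.map_apply, Matrix.smul_apply, Matrix.one_apply, smul_eq_mul, map_mul]
      split_ifs <;> simp
    rw [h2, hHτ, h3] at h1
    have h4 : st D (P.map D.τ * D.A) * H * (P.map D.τ * D.A) =
        (D.c (D.E ^ 3) * D.E ^ 3) • (c' • (1 : Matrix D.Lam D.Lam N)) := by
      rw [hPτ, st_smul, Matrix.smul_mul, Matrix.smul_mul, Matrix.mul_smul, hc', smul_smul]
    have h5 : st D (P.map D.τ * D.A) * H * (P.map D.τ * D.A) =
        st D D.A * (st D (P.map D.τ) * H * P.map D.τ) * D.A := by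
      rw [st_mul]; simp only [Matrix.mul_assoc]
    have h6 : st D D.A = D.A.map D.τ := D.A_τ.symm
    rw [h5, h1, Matrix.mul_smul, Matrix.mul_one, Matrix.smul_mul, h6, X.τA_A, smul_smul, smul_smul] at h4
    have h7 := one_inj _ _ h4
    have h8 : D.c (D.E ^ 3) * D.E ^ 3 = (2 * D.h + 1) ^ 3 := by
      rw [map_pow, ← mul_pow, mul_comm, hE]
    rw [h8, mul_comm] at h7
    exact mul_left_cancel₀ (pow_ne_zero _ hq) h7
  -- the comparison element
  set s := D.θ D.g with hs
  have hs0 : s ≠ 0 := D.θ_ne D.g0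
  have hsS : ∀ σ ∈ S, σ s = s := fun σ hσ => (hS σ hσ).θ _
  have hinvθ : ∀ x : F, x ≠ 0 → D.θ x⁻¹ = (D.θ x)⁻¹ := by
    intro x hx
    apply eq_inv_of_mul_eq_one_left
    rw [← map_mul, inv_mul_cancel₀ hx, map_one]
  have hsc : D.c s = s⁻¹ := by rw [hs, D.cθ, hinvθ _ D.g0]
  have hsτ : D.τ s = (s ^ (2 * D.h + 1))⁻¹ := by
    rw [hs, D.τθ, hinvθ _ (by simpa using D.g0), D.hφ, map_pow]
  have e1 : ((-1 : N) ^ D.u) * (-1) ^ D.u = 1 := by rw [← mul_pow]; simp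
  have hshτ : D.τ (s ^ D.h) = (-1) ^ D.u * s ^ D.h := by
    rw [map_pow, hsτ, ← D.hsign, ← hs]
    have : s ^ (2 * D.h * (D.h + 1)) * s ^ (2 * D.h * (D.h + 1)) = 1 := by rw [hs, D.hsign, e1]
    rw [inv_pow, inv_eq_iff_eq_inv, eq_comm]
    apply inv_eq_of_mul_eq_one_right
    rw [← this]; ring
  have hW0 : D.W ≠ 0 := by
    intro h
    have := X.W_norm ι hι m hm
    rw [h, zero_mul, zero_mul] at this
    exact pow_ne_zero _ hq this.symm
  have hWn := X.W_norm ι hι m hm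
  have hWτ := X.det_A_τW ι hι m hm
  have hcE : D.c D.E ≠ 0 := by simpa using hE0
  obtain ⟨z', hz'⟩ : ∃ z' : N, z' = z0 * s ^ D.h * D.W / D.E ^ (3 * m) := ⟨_, rfl⟩
  have hz'0 : z' ≠ 0 := hz' ▸ div_ne_zero (mul_ne_zero (mul_ne_zero hz0 (pow_ne_zero _ hs0)) hW0)
    (pow_ne_zero _ hE0)
  have hz'τ : D.A.det * D.τ z' = (D.E ^ 3) ^ (2 * m) * z' := by
    have h8 : D.E ^ (3 * m) * D.c D.E ^ (3 * m) = (2 * D.h + 1) ^ (3 * m) := by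
      rw [← mul_pow, hE]
    have h9 : (D.E ^ 3) ^ (2 * m) = D.E ^ (3 * m) * D.E ^ (3 * m) := by ring
    rw [h9, hz', map_div₀, map_mul, map_mul, hz0τ, hshτ, map_pow, hEτ]
    have h10 : D.c D.E ^ (3 * m) ≠ 0 := pow_ne_zero _ hcE
    have h11 : D.E ^ (3 * m) ≠ 0 := pow_ne_zero _ hE0
    generalize D.E ^ (3 * m) = x at *
    generalize D.c D.E ^ (3 * m) = y at *
    rw [← mul_div_assoc, div_eq_iff h10]
    have h12 : x * x * (z0 * s ^ D.h * D.W / x) = x * (z0 * s ^ D.h * D.W) := by field_simp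
    rw [h12]
    linear_combination (-z0 * (-1) ^ D.u * s ^ D.h) * hWτ +
      (z0 * s ^ D.h * (2 * D.h + 1) ^ (3 * m) * D.W) * e1 - z0 * s ^ D.h * D.W * h8
  have hz'n : z' * D.c z' * (2 * D.h + 1) ^ 3 = z0 * D.c z0 * (2 * D.h + 1) ^ D.u := by
    have h8 : D.E ^ (3 * m) * D.c D.E ^ (3 * m) = (2 * D.h + 1) ^ (3 * m) := by
      rw [← mul_pow, hE]
    rw [hz', map_div₀, map_mul, map_mul, map_pow, map_pow, hsc]
    rw [pow_add, ← h8] at hWn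
    have h10 : D.c D.E ^ (3 * m) ≠ 0 := pow_ne_zero _ hcE
    have h11 : D.E ^ (3 * m) ≠ 0 := pow_ne_zero _ hE0
    have h12 : s ^ D.h * s⁻¹ ^ D.h = 1 := by rw [← mul_pow, mul_inv_cancel₀ hs0, one_pow]
    rw [div_mul_div_comm, div_mul_eq_mul_div, div_eq_iff (mul_ne_zero h11 h10)]
    linear_combination (z0 * D.c z0 * D.W * D.c D.W * (2 * D.h + 1) ^ 3) * h12 +
      z0 * D.c z0 * hWn
  obtain ⟨l, hl⟩ : ∃ l : N, l = π / z' := ⟨_, rfl⟩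
  have hl0 : l ≠ 0 := hl ▸ div_ne_zero hPd hz'0
  have hAd : D.A.det ≠ 0 := by
    intro h
    have := X.det_norm
    rw [h, zero_mul] at this
    exact pow_ne_zero _ hq this.symm
  have hlτ : D.τ l = l := by
    have h10 : D.τ z' ≠ 0 := by simpa using hz'0
    rw [hl, map_div₀, div_eq_div_iff h10 hz'0]
    apply mul_left_cancel₀ hAd
    linear_combination z' * hπτ - π * hz'τ
  have hz'S : ∀ σ ∈ S, σ z' = z' := by
    intro σ hσ
    rw [hz', map_div₀, map_mul, map_mul, map_pow, map_pow, hz0S σ hσ, hsS σ hσ, hES σ hσ,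
      D.W_good (hS σ hσ)]
  have hlS : ∀ σ ∈ S, σ l = l := by
    intro σ hσ
    rw [hl, map_div₀, hπS σ hσ, hz'S σ hσ]
  have hcz0 : D.c z0 ≠ 0 := by simpa using hz0
  have hqc : ∀ ρ : N →+* N, ρ (2 * D.h + 1) = 2 * D.h + 1 := by intro ρ; simp only [map_add, map_mul, map_ofNat, map_natCast, map_one]
  obtain ⟨f, hf⟩ : ∃ f : N, f = z0 * D.c z0 := ⟨_, rfl⟩
  have hf0 : f ≠ 0 := hf ▸ mul_ne_zero hz0 hcz0
  have hfc : D.c f = f := by rw [hf, map_mul, D.cc]; ring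
  have hfτ : D.τ f = f := by rw [hf, map_mul, ← D.cτ, hz0τ, map_neg]; ring
  have hfS : ∀ σ ∈ S, σ f = f := by
    intro σ hσ
    rw [hf, map_mul, (hS σ hσ).c, hz0S σ hσ]
  refine ⟨c' ^ m * (2 * D.h + 1) / (f * (2 * D.h + 1) ^ D.u * l), ?_, ?_, ?_, ?_⟩
  · exact div_ne_zero (mul_ne_zero (pow_ne_zero _ hc'0) hq)
      (mul_ne_zero (mul_ne_zero hf0 (pow_ne_zero _ hq)) hl0)
  · rw [map_div₀, map_mul, map_mul, map_mul, map_pow, map_pow, hqc, hc'τ, hfτ, hlτ]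
  · intro σ hσ
    rw [map_div₀, map_mul, map_mul, map_mul, map_pow, map_pow, hqc, hc'S σ hσ, hfS σ hσ, hlS σ hσ]
  · rw [map_div₀, map_mul, map_mul, map_mul, map_pow, map_pow, hqc, hc'c, hfc]
    have hcl : D.c l ≠ 0 := by simpa using hl0
    have h11 : π = l * z' := by rw [hl]; exact (div_mul_cancel₀ _ hz'0).symm
    rw [h11, map_mul] at hdet
    rw [← hf] at hz'n
    have h12 : ((2 * D.h + 1 : N)) ^ (D.u + 1) * f *
        (c' ^ m * (2 * D.h + 1) / (f * (2 * D.h + 1) ^ D.u * l) *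
        (c' ^ m * (2 * D.h + 1) / (f * (2 * D.h + 1) ^ D.u * D.c l))) =
        (2 * D.h + 1) ^ 3 * c' ^ (2 * m) / (f * (2 * D.h + 1) ^ D.u * l * D.c l) := by
      field_simp
      ring
    rw [← hf, h12, eq_div_iff (by
      exact mul_ne_zero (mul_ne_zero (mul_ne_zero hf0 (pow_ne_zero _ hq)) hl0) hcl)]
    linear_combination (2 * D.h + 1 : N) ^ 3 * hdet - H.det * l * D.c l * hz'n

end Grp
end PartFive

section PartSix

open scoped Classical

namespace Grp
variable {F N : Type} [Field F] [Fintype F] [Field N] {D : Dat F N} {G : Type} [Group G]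
  (X : Grp D G)

lemma trace_rho {M : Type} [Field M] (ω : MulChar F M) (g : G) :
    (X.rho ω g).trace = ∑ y, if X.act g y = y then ω (X.mu g y) else 0 := by
  rw [Matrix.trace]
  apply Finset.sum_congr rfl
  intro y _
  simp only [Matrix.diag_apply, rho, eq_comm (a := y)]

lemma card_fiber [Fintype G] (B : Subgroup G) (hB : ∀ g, g ∈ B ↔ X.act g none = none) (y : D.Lam) :
    (Finset.univ.filter (fun x : G => X.act x none = y)).card = Nat.card B := by
  obtain ⟨g, hg⟩ := X.trans y
  rw [Nat.card_eq_fintype_card, ← Finset.card_univ]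
  symm
  apply Finset.card_bij (fun (b : B) _ => g * (b : G))
  · intro b _
    simp only [Finset.mem_filter, Finset.mem_univ, true_and]
    rw [X.act_mul, (hB _).mp b.2, hg]
  · intro a _ b _ h
    exact Subtype.ext (mul_left_cancel h)
  · intro x hx
    simp only [Finset.mem_filter, Finset.mem_univ, true_and] at hx
    refine ⟨⟨g⁻¹ * x, ?_⟩, Finset.mem_univ _, by simp⟩
    rw [hB, X.act_mul, hx, ← hg, X.act_inv_act]

lemma induced_eq [Fintype G] (B : Subgroup G) (hB : ∀ g, g ∈ B ↔ X.act g none = none)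
    (ω : MulChar F ℂ) (θ : B → ℂ) (hθ : ∀ b : B, θ b = ω (X.mu (b : G) none)) (g : G) :
    inducedChar B θ g = (X.rho ω g).trace := by
  have hf : ∀ x : G, (if h : x⁻¹ * g * x ∈ B then θ (⟨x⁻¹ * g * x, h⟩ : ↥B) else 0) =
      (fun y => if X.act g y = y then ω (X.mu g y) else 0) (X.act x none) := by
    intro x
    have h1 : x⁻¹ * g * x ∈ B ↔ X.act g (X.act x none) = X.act x none := by
      rw [hB, X.act_mul, X.act_mul]
      constructor
      · intro h
        have := congrArg (X.act x) h
        rwa [X.act_act_inv] at this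
      · intro h
        rw [h, X.act_inv_act]
    by_cases h : x⁻¹ * g * x ∈ B
    · have h' := h1.mp h
      rw [dif_pos h, hθ]
      simp only
      rw [if_pos h', X.mu_mul, X.mu_mul, h', X.mu_inv]
      congr 1
      have := X.mu_ne x none
      field_simp
    · rw [dif_neg h]
      simp only
      rw [if_neg (fun h' => h (h1.mpr h'))]
  rw [inducedChar, X.trace_rho]
  simp only [hf]
  rw [finsum_eq_sum_of_fintype, ← Finset.sum_fiberwise (s := Finset.univ) (g := fun x : G => X.act x none)]
  have h2 : ∀ y : D.Lam, (∑ x ∈ Finset.univ.filter (fun x : G => X.act x none = y),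
      (if X.act g (X.act x none) = X.act x none then ω (X.mu g (X.act x none)) else 0)) =
      (Nat.card B : ℂ) * (if X.act g y = y then ω (X.mu g y) else 0) := by
    intro y
    rw [← X.card_fiber B hB y, ← nsmul_eq_mul, ← Finset.sum_const]
    apply Finset.sum_congr rfl
    intro x hx
    simp only [Finset.mem_filter, Finset.mem_univ, true_and] at hx
    rw [hx]
  simp only [h2]
  rw [← Finset.mul_sum, ← mul_assoc, inv_mul_cancel₀, one_mul]
  exact_mod_cast Nat.card_pos.ne'

lemma φg_pow (D : Dat F N) : D.φ D.g = D.g ^ (2 * D.h + 1) := D.hφ _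

lemma trace_T1 {M : Type} [Field M] (ω : MulChar F M) :
    ∃ k : G, (X.rho ω k).trace = ω D.g + ω (D.φ D.g)⁻¹ := by
  obtain ⟨k, hk, ⟨m1, a1⟩, m2, a2⟩ := X.actT D.g D.g0
  refine ⟨k, ?_⟩
  have hφ0 : D.φ D.g ≠ 0 := by simpa using D.g0
  have hh := D.hh
  have key : ∀ y, X.act k y = y → y = none ∨ y = zp D := by
    intro x hx
    match x with
    | none => exact Or.inl rfl
    | some (y, z) =>
      right
      have h := X.mat_vec k (some (y, z))
      rw [hx, hk] at h
      have e0 := congrFun h 0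
      have e1 := congrFun h 1
      have e2 := congrFun h 2
      simp [Dat.vec, Matrix.mulVec, dotProduct, Fin.sum_univ_three] at e0 e1 e2
      rw [← e2] at e0 e1
      have hy : y = 0 := by
        by_contra hy
        have h3 := e1.resolve_right hy
        rw [φg_pow, div_eq_iff D.g0, inv_mul_eq_div, eq_div_iff (pow_ne_zero _ D.g0), ← pow_add] at h3
        have h4 : D.g ^ (4 * D.h + 1) = 1 := by
          apply mul_right_cancel₀ D.g0
          rw [one_mul, ← pow_succ]
          exact (congrArg (fun n => D.g ^ n) (by ring)).trans h3
        rw [D.hgo] at h4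
        have h5 : 2 ∣ 4 * D.h + 1 := dvd_trans ⟨2 * D.h * (D.h + 1), by ring⟩ h4
        omega
      subst hy
      have hz : (z : F) = 0 := by
        by_contra hz
        simp [Dat.nm] at e0
        have h3 := e0.resolve_right (fun h => hz (by simpa using h))
        rw [φg_pow, eq_comm, inv_eq_iff_eq_inv, eq_comm] at h3
        have h3 := mul_inv_cancel₀ D.g0 ▸ congrArg (fun x => D.g * x) h3.symm
        rw [← pow_succ', D.hgo] at h3
        have := Nat.le_of_dvd (by omega) h3
        nlinarith
      rw [zp]
      congr
      exact Subtype.ext hz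
  have hne : (none : D.Lam) ≠ zp D := by simp [zp]
  rw [X.trace_rho, ← Finset.sum_subset (Finset.subset_univ {none, zp D}), Finset.sum_pair hne,
    if_pos a1, if_pos a2, m1, m2]
  intro x _ hx
  rw [if_neg]
  intro h
  apply hx
  simpa using key x h

lemma trace_T2 {M : Type} [Field M] (ω : MulChar F M) :
    ∃ (k : G) (n : ℕ), n ≠ 0 ∧ (X.rho ω k).trace = n * ω (D.g ^ (2 * D.h)) := by
  set a := D.g ^ (2 * D.h) with ha
  have ha0 : a ≠ 0 := pow_ne_zero _ D.g0
  have hφa : (D.φ a)⁻¹ = a := by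
    rw [ha, map_pow, φg_pow, ← pow_mul]
    apply inv_eq_of_mul_eq_one_right
    rw [← pow_add, D.hgo]
    exact dvd_of_eq (by ring)
  obtain ⟨k, hk, ⟨m1, a1⟩, m2, a2⟩ := X.actT a ha0
  refine ⟨k, (Finset.univ.filter (fun y => X.act k y = y)).card, ?_, ?_⟩
  · apply Finset.card_ne_zero.mpr
    exact ⟨none, by simp [a1]⟩
  · rw [X.trace_rho, ← Finset.sum_filter, ← nsmul_eq_mul, ← Finset.sum_const]
    apply Finset.sum_congr rfl
    intro x hx
    simp only [Finset.mem_filter, Finset.mem_univ, true_and] at hx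
    match x with
    | none => rw [m1]
    | some (y, z) =>
      have h := X.mat_vec k (some (y, z))
      rw [hx, hk] at h
      have e2 := congrFun h 2
      simp [Dat.vec, Matrix.mulVec, dotProduct, Fin.sum_univ_three] at e2
      rw [← e2, hφa]

end Grp

section SU
variable {p k : ℕ} {F N : Type} [Field F] [Fintype F] [ExpChar F p] [Field N]

/-- forgetful map to matrices -/
def suMat (p k : ℕ) (F : Type) [Field F] [Fintype F] [ExpChar F p] :
    ↥(SU3 p k F) →* Matrix (Fin 3) (Fin 3) F where
  toFun g := ((g : Matrix.SpecialLinearGroup (Fin 3) F) : Matrix (Fin 3) (Fin 3) F)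
  map_one' := rfl
  map_mul' _ _ := rfl

lemma su_mem (D : Dat F N) (hφ : ∀ x, D.φ x = iterateFrobenius F p k x)
    (M : Matrix (Fin 3) (Fin 3) F) (hd : M.det = 1) (hM : (M.map D.φ)ᵀ * Om F * M = Om F) :
    ∃ g, suMat p k F g = M := by
  refine ⟨⟨⟨M, hd⟩, ?_⟩, rfl⟩
  change (Phi p k F M)ᵀ * Om F * M = Om F
  rw [← hM]
  congr 3
  ext i j
  simp [Phi, hφ]

lemma hf_eq (D : Dat F N) (v w : Fin 3 → F) :
    D.hf v w = (fun i => D.φ (v i)) ⬝ᵥ (Om F *ᵥ w) := by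
  simp [Dat.hf, Om, Matrix.mulVec, dotProduct, Fin.sum_univ_three]

/-- the unitary group as an instance of the abstract set-up -/
def suGrp (D : Dat F N) (hφ : ∀ x, D.φ x = iterateFrobenius F p k x) : Grp D ↥(SU3 p k F) where
  mat := suMat p k F
  pres := by
    intro g v w
    have hg : (Phi p k F (suMat p k F g))ᵀ * Om F * suMat p k F g = Om F := g.2
    have h1 : ∀ M : Matrix (Fin 3) (Fin 3) F, (fun i => D.φ ((M *ᵥ v) i)) =
        (Phi p k F M) *ᵥ (fun i => D.φ (v i)) := by
      intro M; ext i
      simp [Phi, Matrix.mulVec, dotProduct, Fin.sum_univ_three, hφ]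
    have h2 : (fun i => D.φ (v i)) ⬝ᵥ (Om F *ᵥ w) = (fun i => D.φ (v i)) ⬝ᵥ
        (((Phi p k F (suMat p k F g))ᵀ * Om F * suMat p k F g) *ᵥ w) := by rw [hg]
    rw [hf_eq, hf_eq, h1, h2, ← Matrix.mulVec_mulVec, ← Matrix.mulVec_mulVec,
      Matrix.dotProduct_mulVec _ (_)ᵀ, Matrix.vecMul_transpose]
  hU := by
    intro y z hz
    have hz' : D.φ z = - z := hz
    apply su_mem D hφ
    · simp [Matrix.det_fin_three]
    · have h2 : D.φ (D.nm y) = D.nm y := D.φ_nm y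
      ext i j
      fin_cases i <;> fin_cases j <;>
        simp [Matrix.mul_apply, Fin.sum_univ_three, Om, D.φφ, hz', h2, map_ofNat]
      have h3 : D.nm y = y * D.φ y := rfl
      linear_combination D.half_add (D.nm y) * (-1) - h3
  hW := by
    apply su_mem D hφ
    · simp [Matrix.det_fin_three]
    · ext i j
      fin_cases i <;> fin_cases j <;>
        simp [Matrix.mul_apply, Fin.sum_univ_three, Om]
  hT := by
    intro a ha
    have ha' : D.φ a ≠ 0 := by simpa using ha
    apply su_mem D hφ
    · simp [Matrix.det_fin_three]
      field_simp
    · ext i j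
      fin_cases i <;> fin_cases j <;>
        simp [Matrix.mul_apply, Fin.sum_univ_three, Om, D.φφ, ha, ha']

lemma mem_borel (D : Dat F N) (hφ : ∀ x, D.φ x = iterateFrobenius F p k x) (g : ↥(SU3 p k F)) :
    g ∈ Borel p k F ↔ (suGrp D hφ).act g none = none := by
  set X := suGrp D hφ
  have hX : ∀ g, X.mat g = suMat p k F g := fun _ => rfl
  constructor
  · intro h
    have h' : Matrix.BlockTriangular (X.mat g) id := h
    have h10 : X.mat g 1 0 = 0 := h' (by decide)
    have h20 : X.mat g 2 0 = 0 := h' (by decide)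
    have e : X.mat g *ᵥ D.vec none = X.mat g 0 0 • D.vec none := by
      ext i; fin_cases i <;> simp [Dat.vec, Matrix.mulVec, dotProduct, Fin.sum_univ_three, h10, h20]
    have hne : X.mat g 0 0 ≠ 0 := by
      intro h0
      rw [h0, zero_smul] at e
      exact D.vec_ne none (X.mat_inj g _ e)
    exact (X.uniq hne e).2
  · intro h
    have e := X.mat_vec g none
    rw [h] at e
    have e0 := congrFun e 0
    have e1 := congrFun e 1
    have e2 := congrFun e 2
    simp [Dat.vec, Matrix.mulVec, dotProduct, Fin.sum_univ_three] at e0 e1 e2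
    have e3 := X.pres g ![1, 0, 0] ![0, 1, 0]
    simp [Dat.hf, Matrix.mulVec, dotProduct, Fin.sum_univ_three, e0, e1, e2] at e3
    have e4 := e3.resolve_left (X.mu_ne g none)
    change Matrix.BlockTriangular (X.mat g) id
    intro i j hij
    fin_cases i <;> fin_cases j <;> simp at hij ⊢ <;> assumption

lemma borel_mu (D : Dat F N) (hφ : ∀ x, D.φ x = iterateFrobenius F p k x) (g : ↥(SU3 p k F))
    (h : g ∈ Borel p k F) : (suGrp D hφ).mu g none = suMat p k F g 0 0 := by
  rw [mem_borel D hφ] at h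
  have e := (suGrp D hφ).mat_vec g none
  rw [h] at e
  have e0 := congrFun e 0
  simp [Dat.vec, Matrix.mulVec, dotProduct, Fin.sum_univ_three] at e0
  exact e0.symm

end SU
end PartSix

section PartSeven

open scoped Classical

section Cyc
variable {r : ℕ} [NeZero r] {N : Type} [Field N] [Algebra ℚ N] [IsCyclotomicExtension {r} ℚ N]

lemma cyc_ext {R : Type} [Field R] [CharZero R] {ζ : N} (hζ : IsPrimitiveRoot ζ r) (a b : N →+* R)
    (h : a ζ = b ζ) : a = b := by
  have h1 : a.toRatAlgHom = b.toRatAlgHom := by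
    apply (hζ.powerBasis ℚ).algHom_ext
    rw [hζ.powerBasis_gen ℚ]
    exact h
  ext x
  exact DFunLike.congr_fun h1 x

lemma cyc_pow {ζ : N} (hζ : IsPrimitiveRoot ζ r) (a : N →+* N) :
    ∃ j : ℕ, ∀ x, x ^ r = 1 → a x = x ^ j := by
  obtain ⟨j, -, hj⟩ := hζ.eq_pow_of_pow_eq_one (ξ := a ζ) (by rw [← map_pow, hζ.pow_eq_one, map_one])
  refine ⟨j, fun x hx => ?_⟩
  obtain ⟨i, -, rfl⟩ := hζ.eq_pow_of_pow_eq_one hx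
  rw [map_pow, ← hj, ← pow_mul, ← pow_mul, mul_comm]

lemma cyc_exists {ζ : N} (hζ : IsPrimitiveRoot ζ r) (j : ℕ) (hj : Nat.Coprime j r) :
    ∃ a : N ≃ₐ[ℚ] N, ∀ x, x ^ r = 1 → a x = x ^ j := by
  have hμ : IsPrimitiveRoot ((IsCyclotomicExtension.zeta r ℚ N) ^ j) r :=
    (IsCyclotomicExtension.zeta_spec r ℚ N).pow_of_coprime j hj
  refine ⟨IsCyclotomicExtension.fromZetaAut hμ (Polynomial.cyclotomic.irreducible_rat (NeZero.pos r)),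
    fun x hx => ?_⟩
  obtain ⟨i, -, rfl⟩ := (IsCyclotomicExtension.zeta_spec r ℚ N).eq_pow_of_pow_eq_one hx
  rw [map_pow, IsCyclotomicExtension.fromZetaAut_spec, ← pow_mul, ← pow_mul, mul_comm]

lemma cyc_comm [CharZero N] {ζ : N} (hζ : IsPrimitiveRoot ζ r) (a b : N →+* N) (x : N) :
    a (b x) = b (a x) := by
  obtain ⟨i, hi⟩ := cyc_pow hζ a
  obtain ⟨j, hj⟩ := cyc_pow hζ b
  have : a.comp b = b.comp a := by
    apply cyc_ext hζ
    simp only [RingHom.comp_apply]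
    rw [hi _ hζ.pow_eq_one, hj _ hζ.pow_eq_one, map_pow, map_pow, hi _ hζ.pow_eq_one,
      hj _ hζ.pow_eq_one, ← pow_mul, ← pow_mul, mul_comm]
  exact DFunLike.congr_fun this x

lemma cyc_lift {ζ : N} (hζ : IsPrimitiveRoot ζ r) (ι : N →+* ℂ) (x : ℂ) (hx : x ^ r = 1) :
    ∃ y : N, y ^ r = 1 ∧ ι y = x := by
  have h1 : IsPrimitiveRoot (ι ζ) r := hζ.map_of_injective ι.injective
  obtain ⟨i, -, hi⟩ := h1.eq_pow_of_pow_eq_one hx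
  refine ⟨ζ ^ i, ?_, by rw [map_pow, hi]⟩
  rw [← pow_mul, mul_comm, pow_mul, hζ.pow_eq_one, one_pow]

lemma conj_of_pow (x : ℂ) (n : ℕ) (hn : n ≠ 0) (hx : x ^ n = 1) : (starRingEnd ℂ) x = x⁻¹ := by
  have h1 : ‖x‖ = 1 := Complex.norm_eq_one_of_pow_eq_one hx hn
  exact (Complex.inv_eq_conj h1).symm

lemma cyc_conj {ζ : N} (hζ : IsPrimitiveRoot ζ r) (ι : N →+* ℂ) (c : N →+* N)
    (hc : ∀ x, x ^ r = 1 → c x = x ^ (r - 1)) (x : N) : ι (c x) = (starRingEnd ℂ) (ι x) := by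
  have : ι.comp c = (starRingEnd ℂ).comp ι := by
    apply cyc_ext hζ
    simp only [RingHom.comp_apply]
    have h1 : (ι ζ) ^ r = 1 := by rw [← map_pow, hζ.pow_eq_one, map_one]
    rw [hc _ hζ.pow_eq_one, conj_of_pow _ r (NeZero.ne r) h1, map_pow]
    apply eq_inv_of_mul_eq_one_left
    rw [← pow_succ, Nat.sub_add_cancel (NeZero.pos r), h1]
  exact DFunLike.congr_fun this x

end Cyc

lemma exists_addChar {p : ℕ} (hp : p.Prime) (F : Type) [Field F] [CharP F p]
    {N : Type} [Field N] (z : N) (hz : z ^ p = 1) (hz1 : z ≠ 1) :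
    ∃ ψ : AddChar F N, ψ 1 ≠ 1 := by
  haveI : Fact p.Prime := ⟨hp⟩
  haveI : NeZero p := ⟨hp.ne_zero⟩
  letI : Algebra (ZMod p) F := ZMod.algebra F p
  obtain ⟨f, hf⟩ := LinearMap.exists_leftInverse_of_injective
    (LinearMap.toSpanSingleton (ZMod p) F 1) (by
      rw [LinearMap.ker_eq_bot]
      intro a b h
      simpa [LinearMap.toSpanSingleton_apply] using h)
  have h1 : f 1 = 1 := by
    have := DFunLike.congr_fun hf 1
    simpa using this
  refine ⟨(AddChar.zmodChar p hz).compAddMonoidHom f.toAddMonoidHom, ?_⟩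
  simp only [AddChar.compAddMonoidHom_apply, LinearMap.toAddMonoidHom_coe, h1]
  rw [AddChar.zmodChar_apply, ZMod.val_one, pow_one]
  exact hz1

end PartSeven

section PartEight

open scoped Classical

lemma exists_dat {p k h u : ℕ} (hp : p.Prime) (hpodd : Odd p) (hk : 0 < k) (hq : 2 * h + 1 = p ^ k)
    (F : Type) [Field F] [Fintype F] [ExpChar F p] (hF : Fintype.card F = (2 * h + 1) ^ 2)
    (hnd1 : ¬ (2 * h) ∣ u)
    (δ : ℂ) (hδ : IsPrimitiveRoot δ (4 * h * (h + 1)))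
    (ν : Fˣ →* ℂˣ) (hνinj : Function.Injective ν)
    (hνpow : ∀ x : Fˣ, ∃ m : ℤ, ((ν x : ℂˣ) : ℂ) = δ ^ m)
    (hνsurj : ∀ m : ℤ, ∃ x : Fˣ, ((ν x : ℂˣ) : ℂ) = δ ^ m)
    {r : ℕ} [NeZero r] (hr : r = p * (4 * h * (h + 1)))
    {N : Type} [Field N] [CharZero N] [Algebra ℚ N] [IsCyclotomicExtension {r} ℚ N]
    (ι : N →+* ℂ) :
    ∃ D : Dat F N, D.h = h ∧ D.u = u ∧ (∀ x, D.φ x = iterateFrobenius F p k x) ∧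
      (∀ x : Fˣ, ι (D.θ (x : F)) = ((ν x : ℂˣ) : ℂ) ^ u) ∧
      (∀ x, ι (D.c x) = (starRingEnd ℂ) (ι x)) ∧
      (∃ τ' : N ≃ₐ[ℚ] N, ∀ x, D.τ x = τ' x) ∧
      ι (D.θ D.g) = δ ^ u ∧
      (∀ σ : N →+* N, (∀ x, σ (D.θ x) = D.θ x) → D.Good σ) := by
  have hchar : CharP F p := by
    cases ‹ExpChar F p› with
    | zero => exact absurd hp (by norm_num)
    | prime _ => assumption
  have hh : 1 ≤ h := by
    rcases Nat.eq_zero_or_pos h with rfl | h'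
    · have : 1 < p ^ k := Nat.one_lt_pow hk.ne' hp.one_lt
      omega
    · exact h'
  set M := 4 * h * (h + 1) with hM
  have hMpos : 0 < M := by positivity
  have hq1 : (2 * h + 1) * (2 * h + 1) = M + 1 := by rw [hM]; ring
  have hpM : Nat.Coprime p M := by
    rw [Nat.Prime.coprime_iff_not_dvd hp]
    intro hd
    have h1 : p ∣ M + 1 := by
      rw [← hq1, hq]; exact Dvd.dvd.mul_left (dvd_pow_self p hk.ne') _
    have h2 : p ∣ 1 := (Nat.dvd_add_right hd).mp h1
    exact hp.one_lt.ne' (Nat.dvd_one.mp h2)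
  have hζ : IsPrimitiveRoot (IsCyclotomicExtension.zeta r ℚ N) r :=
    IsCyclotomicExtension.zeta_spec r ℚ N
  set ζ := IsCyclotomicExtension.zeta r ℚ N
  -- generator
  obtain ⟨gu, hgu⟩ := hνsurj 1
  rw [zpow_one] at hgu
  have hνM : ∀ x : Fˣ, ((ν x : ℂˣ) : ℂ) ^ M = 1 := by
    intro x
    obtain ⟨m, hm⟩ := hνpow x
    rw [hm, ← zpow_natCast, zpow_comm, zpow_natCast, hδ.pow_eq_one, _root_.one_zpow]
  have hgo : ∀ i : ℕ, (gu : F) ^ i = 1 ↔ M ∣ i := by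
    intro i
    rw [← hδ.pow_eq_one_iff_dvd, ← hgu, ← Units.val_pow_eq_pow_val, ← Units.val_pow_eq_pow_val,
      ← map_pow, Units.val_eq_one, Units.val_eq_one, map_eq_one_iff ν hνinj]
  have hg : ∀ x : F, x ≠ 0 → ∃ i < M, x = (gu : F) ^ i := by
    intro x hx
    have : NeZero M := ⟨hMpos.ne'⟩
    obtain ⟨i, hi, h1⟩ := hδ.eq_pow_of_pow_eq_one (hνM (Units.mk0 x hx))
    refine ⟨i, hi, ?_⟩
    have h2 : gu ^ i = Units.mk0 x hx := by
      apply hνinj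
      apply Units.ext
      rw [map_pow, Units.val_pow_eq_pow_val, hgu, h1]
    have := congrArg Units.val h2
    simpa using this.symm
  have hFM : ∀ x : F, x ≠ 0 → x ^ M = 1 := by
    intro x hx
    obtain ⟨i, -, rfl⟩ := hg x hx
    rw [← pow_mul, hgo]; exact Dvd.intro_left i rfl
  -- the multiplicative character
  have hMr : M ∣ r := by rw [hr]; exact Dvd.intro_left p rfl
  have hpr : p ∣ r := by rw [hr]; exact Dvd.intro _ rfl
  have hy : ∀ x : Fˣ, ∃ y : N, ι y = ((ν x : ℂˣ) : ℂ) ^ u := by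
    intro x
    obtain ⟨y, -, hy⟩ := cyc_lift hζ ι (((ν x : ℂˣ) : ℂ) ^ u) (by
      obtain ⟨e, he⟩ := hMr
      rw [he, ← pow_mul, mul_comm u, mul_assoc, pow_mul, hνM, one_pow])
    exact ⟨y, hy⟩
  choose y hy using hy
  let f : Fˣ →* N :=
    { toFun := y
      map_one' := by apply ι.injective; rw [hy, map_one, map_one]; simp
      map_mul' := by
        intro a b
        apply ι.injective
        rw [hy, map_mul, map_mul, hy, hy, Units.val_mul, mul_pow] }
  let θ : MulChar F N := MulChar.ofUnitHom f.toHomUnits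
  have hθu : ∀ x : Fˣ, θ (x : F) = y x := fun x => MulChar.ofUnitHom_coe _ _
  have hθ : ∀ x : Fˣ, ι (θ (x : F)) = ((ν x : ℂˣ) : ℂ) ^ u := fun x => by rw [hθu, hy]
  have hs : ι (θ (gu : F)) = δ ^ u := by rw [hθ, hgu]
  have hθ0 : θ 0 = 0 := MulChar.map_zero θ
  have hθr : ∀ x : F, x ≠ 0 → θ x ^ r = 1 := by
    intro x hx
    obtain ⟨e, he⟩ := hMr
    rw [← map_pow, he, pow_mul, hFM x hx, one_pow, map_one]
  -- additive character
  obtain ⟨z, hz, hz1⟩ : ∃ z : N, z ^ p = 1 ∧ z ≠ 1 := by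
    refine ⟨ζ ^ M, ?_, ?_⟩
    · rw [← pow_mul, mul_comm, ← hr, hζ.pow_eq_one]
    · rw [Ne, hζ.pow_eq_one_iff_dvd, hr]
      intro hd
      have := Nat.le_of_dvd hMpos hd
      have := hp.two_le
      nlinarith
  obtain ⟨ψ, hψ1⟩ := exists_addChar hp F z hz hz1
  have hψp : ∀ x, ψ x ^ p = 1 := by
    intro x
    rw [← AddChar.map_nsmul_eq_pow, nsmul_eq_mul, CharP.cast_eq_zero, zero_mul, AddChar.map_zero_eq_one]
  have hψr : ∀ x, ψ x ^ r = 1 := by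
    intro x
    obtain ⟨e, he⟩ := hpr
    rw [he, pow_mul, hψp, one_pow]
  -- conjugation
  have hr2 : 2 ≤ r := by
    rw [hr]; have := hp.two_le; nlinarith
  have hcop : Nat.Coprime (r - 1) r := by
    have : Nat.Coprime (r - 1) (r - 1 + 1) := by simp
    rwa [Nat.sub_add_cancel (by omega)] at this
  obtain ⟨c, hc⟩ := cyc_exists hζ (r - 1) hcop
  have hcι := cyc_conj hζ ι (c : N →+* N) hc
  -- tau
  obtain ⟨j, hj1, hj2⟩ : ∃ j, j ≡ 1 [MOD p] ∧ j ≡ M - (2 * h + 1) [MOD M] :=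
    ⟨_, (Nat.chineseRemainder hpM 1 (M - (2 * h + 1))).2⟩
  have hqM : 2 * h + 1 ≤ M := by rw [hM]; nlinarith
  have hjM : M ∣ j + (2 * h + 1) := by
    have h1 := Nat.ModEq.add_right (2 * h + 1) hj2
    rw [Nat.sub_add_cancel hqM] at h1
    exact (Nat.modEq_zero_iff_dvd).mp (h1.trans (by simp [Nat.ModEq]))
  have hjp : ∀ w : N, w ^ p = 1 → w ^ j = w := by
    intro w hw
    have h1 : w ^ j = w ^ 1 := by
      rw [pow_eq_pow_mod j hw, hj1, ← pow_eq_pow_mod 1 hw]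
    rw [h1, pow_one]
  have hjcop : Nat.Coprime j r := by
    rw [hr]
    apply Nat.Coprime.mul_right
    · rw [Nat.Coprime, hj1.gcd_eq]; simp
    · rw [Nat.Coprime, hj2.gcd_eq]
      have h1 : Nat.Coprime M (2 * h + 1) := by
        have h2 : Nat.Coprime M (M + 1) := by simp
        rw [← hq1] at h2
        exact Nat.Coprime.coprime_mul_left_right h2
      have h3 : Nat.gcd (M - (2 * h + 1)) M = Nat.gcd (2 * h + 1) M := by
        exact Nat.gcd_self_sub_left hqM
      rw [h3, Nat.gcd_comm]; exact h1
  obtain ⟨τ, hτ⟩ := cyc_exists hζ j hjcop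
  have hφ : ∀ x : F, iterateFrobenius F p k x = x ^ (2 * h + 1) := by
    intro x; rw [iterateFrobenius_def, hq]
  have hζr := hζ.pow_eq_one
  let D : Dat F N :=
    { h := h
      hh := hh
      u := u
      φ := iterateFrobenius F p k
      hφ := hφ
      card := hF
      two := by
        intro h2
        have h3 : ((2 : ℕ) : F) = 0 := by exact_mod_cast h2
        rw [CharP.cast_eq_zero_iff F p] at h3
        have h4 := (Nat.prime_dvd_prime_iff_eq hp Nat.prime_two).mp h3
        rw [h4] at hpodd
        exact absurd hpodd (by decide)
      g := gu
      g0 := gu.ne_zero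
      hg := hg
      hgo := hgo
      θ := θ
      ht := by
        intro h1
        have h2 := congrArg ι h1
        rw [map_pow, hs, map_one, ← pow_mul, hδ.pow_eq_one_iff_dvd] at h2
        apply hnd1
        have h3 : (2 * h) * (2 * h + 2) ∣ u * (2 * h + 2) := by
          convert h2 using 1; rw [hM]; ring
        exact Nat.dvd_of_mul_dvd_mul_right (by omega) h3
      hsign := by
        apply ι.injective
        have h1 : δ ^ (2 * h * (h + 1)) = -1 := by
          have h2 : (δ ^ (2 * h * (h + 1))) * (δ ^ (2 * h * (h + 1))) = 1 := by
            rw [← pow_add, ← hδ.pow_eq_one]; congr 1; rw [hM]; ring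
          rcases mul_self_eq_one_iff.mp h2 with h3 | h3
          · rw [hδ.pow_eq_one_iff_dvd] at h3
            have := Nat.le_of_dvd (by positivity) h3
            rw [hM] at this
            nlinarith
          · exact h3
        rw [map_pow, hs, map_pow, map_neg, map_one, ← pow_mul, mul_comm u, pow_mul, h1]
      ψ := ψ
      ψ1 := hψ1
      c := (c : N →+* N)
      τ := (τ : N →+* N)
      cc := by
        intro x
        apply ι.injective
        rw [hcι, hcι, Complex.conj_conj]
      ττ := by
        intro x
        have : (τ : N →+* N).comp (τ : N →+* N) = RingHom.id N := by
          apply cyc_ext hζ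
          change τ (τ ζ) = ζ
          rw [hτ ζ hζr, map_pow, hτ ζ hζr, ← pow_mul]
          have h1 : r ∣ j * j + (r - 1) := by
            rw [← Nat.modEq_zero_iff_dvd]
            have h2 : j * j ≡ 1 [MOD r] := by
              rw [hr]
              refine (Nat.modEq_and_modEq_iff_modEq_mul hpM).mp ⟨hj1.mul hj1, ?_⟩
              have h3 : j + (2 * h + 1) ≡ 0 [MOD M] := (Nat.modEq_zero_iff_dvd).mpr hjM
              have h4 : j * j + (M + 1 + 2 * (2 * h + 1) * j) ≡ 0 [MOD M] := by
                have := h3.mul h3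
                rw [← hq1]
                convert this using 1; ring
              have h5 : (2 * h + 1) * (2 * h + 1) + (M + 1 + 2 * (2 * h + 1) * j) ≡ 0 [MOD M] := by
                have h6 : (2 * h + 1) * (2 * h + 1) + (M + 1 + 2 * (2 * h + 1) * j) =
                  2 * (2 * h + 1) * (j + (2 * h + 1)) := by rw [← hq1]; ring
                rw [h6]
                have := h3.mul_left (2 * (2 * h + 1))
                simpa using this
              have h7 := Nat.ModEq.add_right_cancel' _ (h4.trans h5.symm)
              rw [hq1] at h7
              exact h7.trans (by simp [Nat.ModEq])
            have h3 := h2.add_right (r - 1)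
            rw [Nat.add_sub_cancel' (by omega : 1 ≤ r)] at h3
            exact h3.trans (by simp [Nat.ModEq])
          have h2 : ζ ^ (j * j) * ζ ^ (r - 1) = ζ * ζ ^ (r - 1) := by
            rw [← pow_add, ← pow_succ', Nat.sub_add_cancel (by omega : 1 ≤ r), hζr]
            exact (hζ.pow_eq_one_iff_dvd _).mpr h1
          exact mul_right_cancel₀ (pow_ne_zero _ (hζ.ne_zero (by omega))) h2
        exact DFunLike.congr_fun this x
      cτ := fun x => cyc_comm hζ _ _ x
      cθ := by
        intro x
        by_cases hx : x = 0
        · rw [hx, _root_.inv_zero, hθ0, map_zero]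
        · change c (θ x) = _
          rw [hc _ (hθr x hx)]
          apply mul_right_cancel₀ (b := θ x) (by
            intro h0; have := hθr x hx; rw [h0, zero_pow (by omega)] at this
            exact zero_ne_one this)
          rw [← pow_succ, Nat.sub_add_cancel (by omega), hθr x hx, ← map_mul, inv_mul_cancel₀ hx,
            map_one]
      cψ := by
        intro x
        change c (ψ x) = _
        rw [hc _ (hψr x)]
        apply mul_right_cancel₀ (b := ψ x) (by
          intro h0; have := hψr x; rw [h0, zero_pow (by omega)] at this
          exact zero_ne_one this)
        rw [← pow_succ, Nat.sub_add_cancel (by omega), hψr x, ← AddChar.map_add_eq_mul,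
          neg_add_cancel, AddChar.map_zero_eq_one]
      τθ := by
        intro x
        by_cases hx : x = 0
        · rw [hx, map_zero (iterateFrobenius F p k), _root_.inv_zero, hθ0, map_zero]
        · change τ (θ x) = _
          rw [hτ _ (hθr x hx), ← map_pow, hφ]
          congr 1
          apply eq_inv_of_mul_eq_one_left
          obtain ⟨e, he⟩ := hjM
          rw [← pow_add, he, pow_mul, hFM x hx, one_pow]
      τψ := by
        intro x
        change τ (ψ x) = _
        rw [hτ _ (hψr x), hjp _ (hψp x)] }
  refine ⟨D, rfl, rfl, fun _ => rfl, hθ, hcι, ⟨τ, fun _ => rfl⟩, hs, ?_⟩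
  intro σ hσ
  refine ⟨hσ, ?_, fun x => cyc_comm hζ _ _ x, fun x => cyc_comm hζ _ _ x⟩
  obtain ⟨i, hi⟩ := cyc_pow hζ σ
  have h1 : ∀ x, σ (ψ x) = ψ ((i : F) * x) := by
    intro x
    rw [hi _ (hψr x), ← AddChar.map_nsmul_eq_pow, nsmul_eq_mul]
  have hi0 : (i : F) ≠ 0 := by
    intro h0
    have h2 := h1 1
    rw [h0, zero_mul, AddChar.map_zero_eq_one] at h2
    exact hψ1 (σ.injective (by rw [h2, map_one]))
  obtain ⟨m, -, hm⟩ := D.fixed_eq (i : F) hi0 (map_natCast _ _)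
  refine ⟨m, fun x => ?_⟩
  rw [← hm]
  exact h1 x

end PartEight

section PartNine

open scoped Classical

variable {F N : Type} [Field F] [Fintype F] [Field N]

lemma dθ_inv (D : Dat F N) (x : F) : D.θ x⁻¹ = (D.θ x)⁻¹ := by
  by_cases hx : x = 0
  · rw [hx, _root_.inv_zero, MulChar.map_zero, _root_.inv_zero]
  · apply eq_inv_of_mul_eq_one_left
    rw [← map_mul, inv_mul_cancel₀ hx, map_one]

lemma c_s (D : Dat F N) : D.c (D.θ D.g) = (D.θ D.g)⁻¹ := by
  rw [D.cθ, dθ_inv]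

lemma τ_s (D : Dat F N) : D.τ (D.θ D.g) = D.θ D.g * D.t⁻¹ := by
  have hs := D.θ_ne D.g0
  rw [D.τθ, dθ_inv, D.hφ, map_pow, Dat.t]
  field_simp
  rw [← pow_succ]

lemma z0_A (D : Dat F N) (ht : D.t ^ 2 ≠ 1) :
    D.t - D.t⁻¹ ≠ 0 ∧ D.τ (D.t - D.t⁻¹) = -(D.t - D.t⁻¹) ∧ D.c (D.t - D.t⁻¹) = -(D.t - D.t⁻¹) := by
  refine ⟨?_, ?_, ?_⟩
  · intro h
    apply ht
    rw [pow_two]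
    nth_rewrite 2 [sub_eq_zero.mp h]
    exact mul_inv_cancel₀ D.t_ne
  · rw [map_sub, map_inv₀, D.τ_t, inv_inv]; ring
  · rw [map_sub, map_inv₀, D.c_t, inv_inv]; ring

lemma t_neg (D : Dat F N) (ht : D.t ^ 2 = 1) : D.t = -1 := by
  rcases mul_self_eq_one_iff.mp ((pow_two D.t).symm.trans ht) with h | h
  · exact absurd h D.ht
  · exact h

lemma z0_B (D : Dat F N) (ht : D.t ^ 2 = 1) :
    D.θ D.g - (D.θ D.g)⁻¹ ≠ 0 ∧ D.τ (D.θ D.g - (D.θ D.g)⁻¹) = -(D.θ D.g - (D.θ D.g)⁻¹) ∧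
      D.c (D.θ D.g - (D.θ D.g)⁻¹) = -(D.θ D.g - (D.θ D.g)⁻¹) := by
  have hs := D.θ_ne D.g0
  have ht' := t_neg D ht
  refine ⟨?_, ?_, ?_⟩
  · intro h
    apply D.ht
    have h2 : D.θ D.g ^ 2 = 1 := by
      rw [pow_two]
      nth_rewrite 2 [sub_eq_zero.mp h]
      exact mul_inv_cancel₀ hs
    rw [show 2 * D.h + 2 = 2 * (D.h + 1) by ring, pow_mul, h2, one_pow]
  · rw [map_sub, map_inv₀, τ_s, ht', inv_neg, inv_one, mul_neg, mul_one, inv_neg]; ring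
  · rw [map_sub, map_inv₀, c_s, inv_inv]; ring

variable {D : Dat F N} {G : Type} [Group G]

section chi

variable (X : Grp D G) (ι : N →+* ℂ) (χ : G → ℂ) (hχ : ∀ g, χ g = ι ((X.rho D.θ g).trace))

lemma mem_T1 (X : Grp D G) (ι : N →+* ℂ) (χ : G → ℂ) (hχ : ∀ g, χ g = ι ((X.rho D.θ g).trace)) :
    ι (D.θ D.g + D.τ (D.θ D.g)) ∈ charField χ := by
  obtain ⟨k, hk⟩ := X.trace_T1 D.θ
  rw [D.τθ, ← hk, ← hχ]
  exact Subfield.subset_closure ⟨k, rfl⟩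

lemma mem_T2 (X : Grp D G) (ι : N →+* ℂ) (χ : G → ℂ) (hχ : ∀ g, χ g = ι ((X.rho D.θ g).trace)) :
    ι (D.θ D.g ^ (2 * D.h)) ∈ charField χ := by
  obtain ⟨k, n, hn, hk⟩ := X.trace_T2 D.θ
  have h1 : χ k ∈ charField χ := Subfield.subset_closure ⟨k, rfl⟩
  rw [hχ, hk, map_mul, map_natCast] at h1
  have h2 : (n : ℂ) ≠ 0 := Nat.cast_ne_zero.mpr hn
  have h3 := mul_mem (inv_mem (natCast_mem (charField χ) n)) h1
  rw [← mul_assoc, inv_mul_cancel₀ h2, one_mul, map_pow D.θ] at h3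
  exact h3

lemma not_real (X : Grp D G) (ι : N →+* ℂ) (hι : ∀ x, ι (D.c x) = (starRingEnd ℂ) (ι x))
    (χ : G → ℂ) (hχ : ∀ g, χ g = ι ((X.rho D.θ g).trace)) (hw : D.θ D.g ^ (2 * D.h) ≠ 1) :
    NotReal χ := by
  intro hle
  have hreal : ∀ x ∈ realsIn, (starRingEnd ℂ) x = x := by
    intro x hx
    have h : realsIn ≤ (starRingEnd ℂ).eqLocusField (RingHom.id ℂ) := by
      rw [realsIn, Subfield.closure_le]
      rintro _ ⟨r, rfl⟩
      exact Complex.conj_ofReal r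
    exact h hx
  have hc : ∀ x, ι x ∈ charField χ → D.c x = x := by
    intro x hx
    apply ι.injective
    rw [hι, hreal _ (hle hx)]
  have hs := D.θ_ne D.g0
  have h1 := hc _ (mem_T1 X ι χ hχ)
  have h2 := hc _ (mem_T2 X ι χ hχ)
  rw [map_pow, c_s] at h2
  rw [map_add, D.cτ, c_s, map_inv₀, τ_s, Dat.t, pow_add] at h1
  set s := D.θ D.g
  set w := s ^ (2 * D.h) with hwd
  have hw0 : w ≠ 0 := pow_ne_zero _ hs
  rw [inv_pow, ← hwd] at h2
  have hw2 : w * w = 1 := by nth_rewrite 1 [← h2]; exact inv_mul_cancel₀ hw0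
  have h3 : (s ^ 2 - 1) * (w - 1) = 0 := by
    have h1' : s⁻¹ + s * w = s + s⁻¹ * w := by
      have e1 : (s * (w * s ^ 2)⁻¹)⁻¹ = s * w := by field_simp
      have e2 : s * (w * s ^ 2)⁻¹ = s⁻¹ * w := by
        rw [_root_.mul_inv, h2]; field_simp
      rw [e1, e2] at h1
      exact h1
    have h4 := congrArg (fun z => s * z) h1'
    simp only [mul_add, ← mul_assoc, mul_inv_cancel₀ hs] at h4
    linear_combination h4
  rcases mul_eq_zero.mp h3 with h | h
  · apply D.ht
    rw [show 2 * D.h + 2 = 2 * (D.h + 1) by ring, pow_mul, sub_eq_zero.mp h, one_pow]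
  · exact hw (sub_eq_zero.mp h)

/-- the fixed subfield -/
def fixF (D : Dat F N) : Subfield N where
  carrier := {y | D.τ y = y ∧ ∀ σ : N →+* N, (∀ x, σ (D.θ x) = D.θ x) → σ y = y}
  mul_mem' := by
    rintro a b ⟨h1, h2⟩ ⟨h3, h4⟩
    exact ⟨by rw [map_mul, h1, h3], fun σ hσ => by rw [map_mul, h2 σ hσ, h4 σ hσ]⟩
  one_mem' := ⟨map_one _, fun σ _ => map_one _⟩
  add_mem' := by
    rintro a b ⟨h1, h2⟩ ⟨h3, h4⟩
    exact ⟨by rw [map_add, h1, h3], fun σ hσ => by rw [map_add, h2 σ hσ, h4 σ hσ]⟩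
  zero_mem' := ⟨map_zero _, fun σ _ => map_zero _⟩
  neg_mem' := by
    rintro a ⟨h1, h2⟩
    exact ⟨by rw [map_neg, h1], fun σ hσ => by rw [map_neg, h2 σ hσ]⟩
  inv_mem' := by
    rintro a ⟨h1, h2⟩
    exact ⟨by rw [map_inv₀, h1], fun σ hσ => by rw [map_inv₀, h2 σ hσ]⟩

lemma charField_lift [CharZero N] (X : Grp D G) (ι : N →+* ℂ) (χ : G → ℂ)
    (hχ : ∀ g, χ g = ι ((X.rho D.θ g).trace))
    (hgood : ∀ σ : N →+* N, (∀ x, σ (D.θ x) = D.θ x) → D.Good σ)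
    (x : ℂ) (hx : x ∈ charField χ) : ∃ y, ι y = x ∧ D.τ y = y ∧
      ∀ σ : N →+* N, (∀ x, σ (D.θ x) = D.θ x) → σ y = y := by
  have h : charField χ ≤ (fixF D).map ι := by
    rw [charField, Subfield.closure_le]
    rintro _ ⟨g, rfl⟩
    refine ⟨(X.rho D.θ g).trace, ⟨?_, ?_⟩, (hχ g).symm⟩
    · have hdet : D.A.det ≠ 0 := by
        intro h0
        have := X.det_norm
        rw [h0, zero_mul] at this
        exact pow_ne_zero _ D.q_ne this.symm
      have h1 := X.A_rho g
      have hu : IsUnit D.A.det := hdet.isUnit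
      have h2 : (X.rho D.θ g).map D.τ = D.A * X.rho D.θ g * D.A⁻¹ := by
        rw [h1, Matrix.mul_assoc, Matrix.mul_nonsing_inv _ hu, Matrix.mul_one]
      have h3 : D.τ ((X.rho D.θ g).trace) = ((X.rho D.θ g).map D.τ).trace := by
        simp [Matrix.trace]
      rw [h3, h2, Matrix.trace_mul_comm, ← Matrix.mul_assoc, Matrix.nonsing_inv_mul _ hu,
        Matrix.one_mul]
    · intro σ hσ
      have h3 : σ ((X.rho D.θ g).trace) = ((X.rho D.θ g).map σ).trace := by
        simp [Matrix.trace]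
      rw [h3, X.rho_map (hgood σ hσ)]
  obtain ⟨y, hy, hyx⟩ := h hx
  exact ⟨y, hyx, hy⟩

lemma charField_mem [CharZero N] [Algebra ℚ N] [FiniteDimensional ℚ N] [IsGalois ℚ N]
    (X : Grp D G) (ι : N →+* ℂ) (χ : G → ℂ)
    (hχ : ∀ g, χ g = ι ((X.rho D.θ g).trace))
    (y : N) (hτ : D.τ y = y) (hy : ∀ σ : N →+* N, (∀ x, σ (D.θ x) = D.θ x) → σ y = y) :
    ι y ∈ charField χ := by
  let K0 : Subfield N := (charField χ).comap ι
  have hKr : ∀ r : ℚ, algebraMap ℚ N r ∈ K0 := by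
    intro r
    change ι (algebraMap ℚ N r) ∈ charField χ
    rw [eq_ratCast, map_ratCast]
    exact SubfieldClass.ratCast_mem _ r
  let K : IntermediateField ℚ N := K0.toIntermediateField hKr
  have hK : ∀ z, z ∈ K ↔ ι z ∈ charField χ := fun z => Iff.rfl
  rw [← hK, ← IsGalois.fixedField_fixingSubgroup K, IntermediateField.mem_fixedField_iff]
  intro σ hσ
  rw [IntermediateField.mem_fixingSubgroup_iff] at hσ
  have h1 := hσ _ ((hK _).mpr (mem_T1 X ι χ hχ))
  have h2 := hσ _ ((hK _).mpr (mem_T2 X ι χ hχ))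
  have hs := D.θ_ne D.g0
  have hprod : D.θ D.g * D.τ (D.θ D.g) = (D.θ D.g ^ (2 * D.h))⁻¹ := by
    rw [τ_s, Dat.t, pow_add]; field_simp
  have hprod' : σ (D.θ D.g) * σ (D.τ (D.θ D.g)) = D.θ D.g * D.τ (D.θ D.g) := by
    rw [← map_mul, hprod, map_inv₀, h2]
  rw [map_add] at h1
  have hall : ∀ σ' : N →+* N, σ' (D.θ D.g) = D.θ D.g → ∀ x, σ' (D.θ x) = D.θ x := by
    intro σ' h x
    by_cases hx : x = 0
    · rw [hx, MulChar.map_zero, map_zero]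
    · obtain ⟨i, -, rfl⟩ := D.hg x hx
      rw [map_pow D.θ, map_pow, h]
  have hq : (σ (D.θ D.g) - D.θ D.g) * (σ (D.θ D.g) - D.τ (D.θ D.g)) = 0 := by
    linear_combination -hprod' + σ (D.θ D.g) * h1
  rcases mul_eq_zero.mp hq with h | h
  · exact hy (σ : N →+* N) (hall _ (sub_eq_zero.mp h))
  · have h3 := hy (D.τ.comp (σ : N →+* N)) (hall _ (by
      change D.τ (σ (D.θ D.g)) = _
      rw [sub_eq_zero.mp h, D.ττ]))
    have h4 : D.τ (σ y) = y := h3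
    rw [← D.ττ (σ y), h4, hτ]

end chi

end PartNine

section PartTen

open scoped Classical

variable {F N : Type} [Field F] [Fintype F] [Field N] {D : Dat F N} {G : Type} [Group G]

lemma is_irr [Fintype G] (X : Grp D G) (ω : MulChar F ℂ) (hω : ω D.g ^ (2 * D.h + 2) ≠ 1)
    (χ : G → ℂ) (hχ : ∀ g, χ g = (X.rho ω g).trace) : IsIrrChar χ := by
  let n := Fintype.card D.Lam
  let e : Fin n ≃ D.Lam := (Fintype.equivFin D.Lam).symm
  let ρ0 : G →* Matrix (Fin n) (Fin n) ℂ :=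
    { toFun := fun g => (X.rho ω g).submatrix e e
      map_one' := by rw [X.rho_one, Matrix.submatrix_one_equiv]
      map_mul' := fun g k => by rw [X.rho_mul, Matrix.submatrix_mul_equiv] }
  have hρ0 : ∀ g, ρ0 g = (X.rho ω g).submatrix e e := fun _ => rfl
  have hρ : ∀ g, ((ρ0.toHomUnits g : GL (Fin n) ℂ) : Matrix (Fin n) (Fin n) ℂ) =
      (X.rho ω g).submatrix e e := fun _ => rfl
  refine ⟨n, ρ0.toHomUnits, ⟨Fintype.card_pos, ?_⟩, ?_⟩
  · intro W hW
    let L : (Fin n → ℂ) ≃ₗ[ℂ] (D.Lam → ℂ) := LinearEquiv.funCongrLeft ℂ ℂ e.symm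
    have hL : ∀ v x, L v x = v (e.symm x) := fun _ _ => rfl
    have key : ∀ g v, X.rho ω g *ᵥ (L v) = L ((X.rho ω g).submatrix e e *ᵥ v) := by
      intro g v
      ext x
      rw [hL]
      simp only [Matrix.mulVec, dotProduct, Matrix.submatrix_apply, Equiv.apply_symm_apply]
      rw [← Equiv.sum_comp e]
      simp only [hL, Equiv.symm_apply_apply]
    rcases X.irred ω hω (W.map (L : (Fin n → ℂ) →ₗ[ℂ] (D.Lam → ℂ))) (by
      rintro g _ ⟨v, hv, rfl⟩
      refine ⟨(X.rho ω g).submatrix e e *ᵥ v, ?_, (key g v).symm⟩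
      have := hW g v hv
      rw [hρ] at this
      exact this) with h | h
    · left
      rw [Submodule.map_eq_bot_iff] at h
      exact h
    · right
      rw [eq_top_iff]
      intro v _
      have hv : L v ∈ W.map (L : (Fin n → ℂ) →ₗ[ℂ] (D.Lam → ℂ)) := by rw [h]; trivial
      obtain ⟨w, hw, hwv⟩ := hv
      have : w = v := L.injective hwv
      rw [← this]; exact hw
  · ext g
    rw [hχ, charOf, hρ]
    simp only [Matrix.trace, Matrix.diag_apply, Matrix.submatrix_apply]
    exact (Equiv.sum_comp e (fun x => X.rho ω g x x)).symm

lemma disc_main [Fintype G] [CharZero N] [Algebra ℚ N] [FiniteDimensional ℚ N] [IsGalois ℚ N]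
    (X : Grp D G) (ι : N →+* ℂ) (hι : ∀ x, ι (D.c x) = (starRingEnd ℂ) (ι x)) (χ : G → ℂ)
    (hχ : ∀ g, χ g = ι ((X.rho D.θ g).trace))
    (hgood : ∀ σ : N →+* N, (∀ x, σ (D.θ x) = D.θ x) → D.Good σ)
    (z0 : N) (hz0 : z0 ≠ 0 ∧ D.τ z0 = - z0 ∧ D.c z0 = - z0)
    (hz0S : ∀ σ : N →+* N, (∀ x, σ (D.θ x) = D.θ x) → σ z0 = z0) (d sg : ℂ)
    (hsg : (-1 : ℂ) ^ (((2 * D.h + 1) ^ 3 + 1) * ((2 * D.h + 1) ^ 3 + 1 - 1) / 2) = sg)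
    (hd : d = sg * ((2 * D.h + 1 : ℂ) ^ (D.u + 1) * (-(ι z0) ^ 2))) : HasUnitaryDisc χ d := by
  intro n ρ hρχ hρL H hHL hHu hHc hinv
  have hn : n = (2 * D.h + 1) ^ 3 + 1 := by
    have h1 : χ 1 = n := by
      rw [hρχ, charOf, map_one]; simp
    rw [hχ, X.rho_one, Matrix.trace_one, D.card_Lam, map_natCast] at h1
    exact_mod_cast h1.symm
  have hcard : Fintype.card (Fin n) = Fintype.card D.Lam := by
    rw [Fintype.card_fin, hn, D.card_Lam]
  let e : D.Lam ≃ Fin n := (Fintype.equivOfCardEq hcard).symm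
  have hlift := charField_lift X ι χ hχ hgood
  choose R0 hR0 hR0τ hR0S using fun g i j => hlift _ (hρL g i j)
  choose H0 hH0 hH0τ hH0S using fun i j => hlift _ (hHL i j)
  let R : G → Matrix D.Lam D.Lam N := fun g => Matrix.of fun x y => R0 g (e x) (e y)
  let HN : Matrix D.Lam D.Lam N := Matrix.of fun x y => H0 (e x) (e y)
  have hRι : ∀ g, (R g).map ι = (ρ g : Matrix (Fin n) (Fin n) ℂ).submatrix e e := by
    intro g; ext x y; exact hR0 g _ _
  have hHι : HN.map ι = H.submatrix e e := by
    ext x y; exact hH0 _ _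
  have hinj : ∀ {A B : Matrix D.Lam D.Lam N}, A.map ι = B.map ι → A = B := by
    intro A B h
    exact Matrix.map_injective ι.injective h
  have hst : ∀ A : Matrix D.Lam D.Lam N, (Grp.st D A).map ι = (A.map ι).conjTranspose := by
    intro A; ext x y
    simp only [Grp.st, Matrix.map_apply, Matrix.transpose_apply, Matrix.conjTranspose_apply, hι]
    rfl
  have hdet : ι HN.det = H.det := by
    rw [RingHom.map_det, RingHom.mapMatrix_apply, hHι, Matrix.det_submatrix_equiv_self]
  have hm : ∃ m, (2 * D.h + 1) ^ 3 + 1 = 2 * m :=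
    ⟨4 * D.h ^ 3 + 6 * D.h ^ 2 + 3 * D.h + 1, by ring⟩
  obtain ⟨m, hm⟩ := hm
  obtain ⟨y, hy0, hyτ, hyS, hy⟩ := X.main ι hι {σ | ∀ x, σ (D.θ x) = D.θ x} hgood R
    (by
      intro g k
      apply hinj
      rw [Matrix.map_mul, hRι, hRι, hRι, map_mul, Units.val_mul, Matrix.submatrix_mul_equiv])
    (by
      intro g
      apply ι.injective
      rw [← hχ, hρχ, charOf, Matrix.trace, Matrix.trace, map_sum, ← Equiv.sum_comp e]
      exact Finset.sum_congr rfl (fun x _ => hR0 g _ _))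
    (by intro g σ hσ; ext x y; exact hR0S g _ _ σ hσ)
    (by intro g; ext x y; exact hR0τ g _ _)
    HN
    (by intro σ hσ; ext x y; exact hH0S _ _ σ hσ)
    (by ext x y; exact hH0τ _ _)
    (by
      intro h0
      rw [← hdet, h0, map_zero] at hHu
      exact not_isUnit_zero hHu)
    (by
      apply hinj
      rw [hst, hHι, Matrix.conjTranspose_submatrix, hHc])
    (by
      intro g
      apply hinj
      rw [Matrix.map_mul, Matrix.map_mul, hst, hHι, hRι, Matrix.conjTranspose_submatrix,
        Matrix.submatrix_mul_equiv, Matrix.submatrix_mul_equiv, hinv])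
    z0 hz0.1 hz0.2.1 hz0.2.2 hz0S m hm
  refine ⟨ι y, charField_mem X ι χ hχ y hyτ hyS, (map_ne_zero ι).mpr hy0, ?_⟩
  have hsg' : (-1 : ℂ) ^ (n * (n - 1) / 2) = sg := by rw [hn]; exact hsg
  rw [hsg', ← hdet, hy, hd, hz0.2.2, ← hι]
  simp only [map_mul, map_pow, map_neg, map_add, map_one, map_ofNat, map_natCast]
  ring

end PartTen

/-- the unitary discriminants of the characters of `SU₃(q)`, `q` odd,
induced from the linear characters `θ_u : g ↦ ν(g₁₁)^u` of the Borel subgroup,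
where `ν` is an isomorphism from `F_{q²}ˣ` onto the group generated by
`δ = exp(2πi/(q²-1))`. -/
theorem stmt16 (p k q : ℕ) (hp : p.Prime) (hpodd : Odd p) (hk : 0 < k) (hq : q = p ^ k)
    (F : Type) [Field F] [Fintype F] [ExpChar F p] (hF : Fintype.card F = q ^ 2)
    (u : ℕ) (hu1 : 1 ≤ u) (hu2 : u < q ^ 2 - 1)
    (hnd1 : ¬ (q - 1) ∣ u) (hnd2 : ¬ (q + 1) ∣ u)
    (δ : ℂ) (hδ : δ = Complex.exp (2 * Real.pi * Complex.I / ((q : ℂ) ^ 2 - 1)))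
    (ν : Fˣ →* ℂˣ) (hνinj : Function.Injective ν)
    (hνpow : ∀ x : Fˣ, ∃ m : ℤ, ((ν x : ℂˣ) : ℂ) = δ ^ m)
    (hνsurj : ∀ m : ℤ, ∃ x : Fˣ, ((ν x : ℂˣ) : ℂ) = δ ^ m)
    (θ : ↥(Borel p k F) → ℂ)
    (hθ : ∀ g : ↥(Borel p k F), ∃ x : Fˣ,
      (x : F) = (((g : ↥(SU3 p k F)) : Matrix.SpecialLinearGroup (Fin 3) F) :
        Matrix (Fin 3) (Fin 3) F) 0 0 ∧ θ g = ((ν x : ℂˣ) : ℂ) ^ u)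
    (χ : ↥(SU3 p k F) → ℂ) (hχ : χ = inducedChar (Borel p k F) θ)
    (f : ℂ)
    (hf : f = if ((q - 1) / 2 : ℕ) ∣ u
      then -(δ ^ (u : ℤ) + δ ^ ((q * u : ℕ) : ℤ)) ^ 2
      else -(δ ^ (((q + 1) * u : ℕ) : ℤ) - δ ^ (-(((q + 1) * u : ℕ) : ℤ))) ^ 2) :
    IsIrrChar χ ∧ χ 1 = (q : ℂ) ^ 3 + 1 ∧ NotReal χ ∧
    (q % 4 = 1 → HasUnitaryDisc χ (-(q : ℂ) ^ (u + 1) * f)) ∧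
    (q % 4 = 3 → HasUnitaryDisc χ ((q : ℂ) ^ (u + 1) * f)) := by
  classical
  have hqodd : Odd q := by rw [hq]; exact hpodd.pow
  obtain ⟨h, hqh⟩ := hqodd
  have hh : 1 ≤ h := by
    have h1 : 1 < p ^ k := Nat.one_lt_pow hk.ne' hp.one_lt
    omega
  subst hqh
  set M := 4 * h * (h + 1) with hM
  have hMpos : 0 < M := by positivity
  have hq2 : (2 * h + 1) ^ 2 - 1 = M := by
    have : (2 * h + 1) ^ 2 = M + 1 := by rw [hM]; ring
    omega
  have hprim : IsPrimitiveRoot δ M := by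
    have h1 := Complex.isPrimitiveRoot_exp M hMpos.ne'
    have h2 : (((2 * h + 1 : ℕ) : ℂ)) ^ 2 - 1 = (M : ℂ) := by rw [hM]; push_cast; ring
    rw [hδ, h2]; exact h1
  have hnd1' : ¬ 2 * h ∣ u := by simpa using hnd1
  set r := p * M with hr
  have hrpos : 0 < r := Nat.mul_pos hp.pos hMpos
  haveI : NeZero r := ⟨hrpos.ne'⟩
  haveI : NeZero ((r : ℕ) : ℚ) := ⟨Nat.cast_ne_zero.mpr hrpos.ne'⟩
  let N := CyclotomicField r ℚ
  haveI : IsCyclotomicExtension {r} ℚ N := CyclotomicField.isCyclotomicExtension r ℚ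
  haveI : FiniteDimensional ℚ N := IsCyclotomicExtension.finiteDimensional {r} ℚ N
  haveI : IsGalois ℚ N := IsCyclotomicExtension.isGalois {r} ℚ N
  haveI : CharZero N := algebraRat.charZero N
  let ι : N →+* ℂ := (IsAlgClosed.lift (R := ℚ) (S := N) (M := ℂ) : N →ₐ[ℚ] ℂ)
  obtain ⟨D, hDh, hDu, hφ, hDθ, hι, -, hDg, hgood⟩ := exists_dat (u := u) hp hpodd hk hq F hF hnd1' δ
    hprim ν hνinj hνpow hνsurj (r := r) hr (N := N) ι
  haveI : Fintype ↥(SU3 p k F) := Fintype.ofFinite _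
  set X := suGrp D hφ with hX
  let ω : MulChar F ℂ := D.θ.ringHomComp ι
  have hω : ∀ x, ω x = ι (D.θ x) := fun _ => rfl
  have hχω : ∀ g, χ g = (X.rho ω g).trace := by
    intro g
    rw [hχ]
    refine X.induced_eq (Borel p k F) (mem_borel D hφ) ω θ ?_ g
    intro b
    obtain ⟨x, hx, hxθ⟩ := hθ b
    rw [hxθ, borel_mu D hφ _ b.2, hω]
    change _ = ι (D.θ ((((b : ↥(SU3 p k F)) : Matrix.SpecialLinearGroup (Fin 3) F) :
        Matrix (Fin 3) (Fin 3) F) 0 0))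
    rw [← hx, hDθ]
  have hχι : ∀ g, χ g = ι ((X.rho D.θ g).trace) := by
    intro g
    rw [hχω, Matrix.trace, Matrix.trace, map_sum]
    apply Finset.sum_congr rfl
    intro x _
    simp only [Matrix.diag_apply, Grp.rho, hω]
    split_ifs <;> simp
  have hDgp : ∀ i : ℕ, ι (D.θ D.g ^ i) = δ ^ (u * i) := by
    intro i; rw [map_pow, hDg, pow_mul]
  have hDgone : ∀ i : ℕ, D.θ D.g ^ i = 1 ↔ M ∣ u * i := by
    intro i
    rw [← hprim.pow_eq_one_iff_dvd, ← hDgp, ← map_one ι]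
    exact ι.injective.eq_iff.symm
  have hδ0 : δ ≠ 0 := hprim.ne_zero hMpos.ne'
  have hs0 := D.θ_ne D.g0
  -- the element `z0`
  have hz : ∃ z0 : N, (z0 ≠ 0 ∧ D.τ z0 = - z0 ∧ D.c z0 = - z0) ∧
      (∀ σ : N →+* N, (∀ x, σ (D.θ x) = D.θ x) → σ z0 = z0) ∧ f = -(ι z0) ^ 2 := by
    have hht : D.t ^ 2 = 1 ↔ h ∣ u := by
      rw [Dat.t, ← pow_mul, hDgone, hDh, hM,
        show u * ((2 * h + 2) * 2) = (4 * (h + 1)) * u by ring,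
        show 4 * h * (h + 1) = (4 * (h + 1)) * h by ring]
      exact Nat.mul_dvd_mul_iff_left (by positivity)
    have hιt : ι D.t = δ ^ ((2 * h + 1 + 1) * u) := by
      rw [Dat.t, hDgp, hDh]; congr 1; ring
    have hdiv : (2 * h + 1 - 1) / 2 = h := by omega
    rw [hdiv] at hf
    by_cases hu : h ∣ u
    · refine ⟨_, z0_B D (hht.mpr hu), ?_, ?_⟩
      · intro σ hσ
        rw [map_sub, map_inv₀, hσ]
      · rw [hf, if_pos hu, map_sub, map_inv₀, hDg]
        have h1 : δ ^ ((2 * h + 1) * u) = -(δ ^ u)⁻¹ := by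
          have h2 := congrArg ι (t_neg D (hht.mpr hu))
          rw [hιt, map_neg, map_one, add_mul, one_mul, pow_add] at h2
          apply mul_right_cancel₀ (pow_ne_zero u hδ0)
          rw [h2, neg_mul, inv_mul_cancel₀ (pow_ne_zero u hδ0)]
        rw [zpow_natCast, zpow_natCast, h1]; ring
    · refine ⟨_, z0_A D (fun h1 => hu (hht.mp h1)), ?_, ?_⟩
      · intro σ hσ
        rw [map_sub, map_inv₀, Dat.t, map_pow, hσ]
      · rw [hf, if_neg hu, map_sub, map_inv₀, hιt, _root_.zpow_neg, zpow_natCast]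
  obtain ⟨z0, hz1, hz2, hz3⟩ := hz
  refine ⟨?_, ?_, ?_, ?_, ?_⟩
  · refine is_irr X ω ?_ χ hχω
    intro h1
    apply D.ht
    apply ι.injective
    rw [map_pow, map_one]
    exact h1
  · rw [hχω, X.rho_one, Matrix.trace_one, D.card_Lam, hDh]
    push_cast; ring
  · refine not_real X ι hι χ hχι ?_
    rw [Ne, hDgone, hDh, hM, show u * (2 * h) = (2 * h) * u by ring,
      show 4 * h * (h + 1) = 2 * h * (2 * h + 1 + 1) by ring,
      Nat.mul_dvd_mul_iff_left (by positivity)]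
    exact hnd2
  · intro h4
    obtain ⟨j, rfl⟩ : ∃ j, h = 2 * j := ⟨h / 2, by omega⟩
    refine disc_main X ι hι χ hχι hgood z0 hz1 hz2 _ (-1) ?_ ?_
    · rw [hDh]
      apply Odd.neg_one_pow
      rw [Nat.add_sub_cancel,
        show ((2 * (2 * j) + 1) ^ 3 + 1) * (2 * (2 * j) + 1) ^ 3 =
          2 * ((2 * (16 * j ^ 3 + 12 * j ^ 2 + 3 * j) + 1) * (2 * (2 * j) + 1) ^ 3) by ring,
        Nat.mul_div_cancel_left _ (by norm_num)]
      exact Odd.mul (odd_two_mul_add_one _) (Odd.pow (odd_two_mul_add_one _))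
    · rw [hDh, hDu, hz3]; push_cast; ring
  · intro h4
    obtain ⟨j, rfl⟩ : ∃ j, h = 2 * j + 1 := ⟨h / 2, by omega⟩
    refine disc_main X ι hι χ hχι hgood z0 hz1 hz2 _ 1 ?_ ?_
    · rw [hDh]
      apply Even.neg_one_pow
      rw [Nat.add_sub_cancel,
        show ((2 * (2 * j + 1) + 1) ^ 3 + 1) * (2 * (2 * j + 1) + 1) ^ 3 =
          2 * ((2 * (16 * j ^ 3 + 36 * j ^ 2 + 27 * j + 7)) * (2 * (2 * j + 1) + 1) ^ 3) by ring,
        Nat.mul_div_cancel_left _ (by norm_num)]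
      exact Even.mul_right (even_two_mul _) _
    · rw [hDh, hDu, hz3]; push_cast; ring

end Paper
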